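/- Suppose Γ is a configuration satisfying the Working Conditions with at least one bad vertex, let φ be an embedding of Γ into ℤ^N, let v_0,…,v_m be the extended bad part of Γ, and suppose v_0 is not a leaf of Γ. If some screw e ∈ supp(φ(v_2)) ∩ supp(φ(v_3)) is not clean, then there exists a vertex v of Γ with w(v) ≥ 4 such that |supp(φ(v)) ∩ supp(φ(v_1))| = |supp(φ(v)) ∩ supp(φ(v_2))| = |supp(φ(v)) ∩ supp(φ(v_3))| = 2. -/

import Mathlib

namespace LensPaper

/-- A finite weighted simple graph: the combinatorial data underlying a configuration
(a disjoint union of weighted linear graphs).  The fact that every connected component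
is a path is recorded separately by `Config.IsLinear`. -/
structure Config where
  V : Type
  fin : Fintype V
  deq : DecidableEq V
  graph : SimpleGraph V
  adjDec : DecidableRel graph.Adj
  w : V → ℤ

attribute [instance] Config.fin Config.deq Config.adjDec

namespace Config

/-- The degree of a vertex. -/
noncomputable def deg (C : Config) (v : C.V) : ℕ := (C.graph.neighborSet v).ncard

/-- A configuration: every component is a path, i.e. all degrees are at most `2` and the
graph is acyclic. -/
def IsLinear (C : Config) : Prop :=
  (∀ v : C.V, C.deg v ≤ 2) ∧ C.graph.IsAcyclic

/-- The adjusted weight `w'(v) = w(v) - deg(v)`. -/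
noncomputable def adjw (C : Config) (v : C.V) : ℤ := C.w v - C.deg v

/-- A vertex is bad if it is adjacent to two distinct vertices of positive adjusted
weight. -/
def IsBad (C : Config) (x : C.V) : Prop :=
  ∃ u v : C.V, u ≠ v ∧ C.graph.Adj x u ∧ C.graph.Adj x v ∧ 0 < C.adjw u ∧ 0 < C.adjw v

/-- A leaf: a vertex of degree at most one. -/
def IsLeaf (C : Config) (v : C.V) : Prop := C.deg v ≤ 1

/-- `v 0, v 1, …, v m` is a chain of consecutive (distinct) vertices. -/
def IsChain (C : Config) (m : ℕ) (v : ℕ → C.V) : Prop :=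
  (∀ i ≤ m, ∀ j ≤ m, v i = v j → i = j) ∧ ∀ i < m, C.graph.Adj (v i) (v (i + 1))

/-- The chain `v 0, …, v m` has the list `p` as its sequence of adjusted weights. -/
def ChainPattern (C : Config) (m : ℕ) (v : ℕ → C.V) (p : List ℤ) : Prop :=
  C.IsChain m v ∧ m + 1 = p.length ∧ ∀ i : Fin p.length, C.adjw (v i) = p.get i

/-- `Γ` contains a chain of consecutive vertices whose adjusted weights, read in order,
form the list `p`. -/
def HasPattern (C : Config) (p : List ℤ) : Prop := ∃ m v, C.ChainPattern m v p

/-- A chain realizing a bad-part pattern `p` (each entry of `p` is an adjusted weight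
together with a flag marking the bad positions): the chain has the prescribed adjusted
weights, and the bad vertices of the configuration are exactly the vertices of the chain
in the flagged positions. -/
def IsBadPartChain (C : Config) (p : List (ℤ × Bool)) (m : ℕ) (v : ℕ → C.V) : Prop :=
  C.IsChain m v ∧ m + 1 = p.length ∧
  (∀ i : Fin p.length, C.adjw (v i) = (p.get i).1) ∧
  (∀ x : C.V, C.IsBad x ↔ ∃ i : Fin p.length, (p.get i).2 = true ∧ v i = x)

end Config

/-- The chains of adjusted weights forbidden by Working Condition VI. -/
def forbiddenPatterns : List (List ℤ) :=
  [[1, 0, 0, 2], [1, 0, 0, 3], [1, 0, 0, 0, 3], [1, 1, 0, 0, 1, 2], [3, 1, 0, 0, 1],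
   [1, 0, 1, 2], [1, 0, 1, 3], [1, 1, 0, 2], [1, 1, 0, 1, 1, 2]]

/-- The bad-part patterns of Working Condition VII; `true` marks the bad positions. -/
def badPatterns : List (List (ℤ × Bool)) :=
  [[(1, false), (0, true), (1, false)],
   [(1, false), (0, true), (2, false)],
   [(1, false), (0, true), (3, false)],
   [(1, false), (1, true), (1, false)],
   [(1, false), (1, true), (2, false)],
   [(1, false), (2, true), (1, false)],
   [(1, false), (0, true), (1, false), (0, true), (1, false)],
   [(1, false), (0, true), (1, false), (0, true), (2, false)],
   [(1, false), (0, true), (1, false), (1, true), (1, false)],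
   [(1, false), (0, true), (1, false), (1, true), (2, false)],
   [(1, false), (1, true), (1, true), (1, false)],
   [(1, false), (1, true), (1, true), (1, true), (1, false)],
   [(1, false), (1, true), (2, true), (1, false)]]

namespace Config

/-- The Working Conditions (I)–(VII). -/
def WorkingConditions (C : Config) : Prop :=
  (∀ v : C.V, 2 ≤ C.w v) ∧
  (∀ v : C.V, C.adjw v ≤ 3) ∧
  (∀ u v : C.V, 1 < C.adjw u → 1 < C.adjw v → u = v) ∧
  (∀ v x : C.V, 1 < C.adjw v → C.IsBad x → C.adjw x = 1 → C.graph.Adj x v) ∧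
  ((∃ v : C.V, C.adjw v = 3) →
     ∀ u u' : C.V, C.graph.Adj u u' → C.adjw u = 1 → C.adjw u' = 1 → False) ∧
  (∀ u v x : C.V, C.graph.Adj u v → C.adjw u = 1 → C.adjw v = 1 →
     C.IsBad x → C.adjw x = 2 → C.graph.Adj x u ∨ C.graph.Adj x v) ∧
  (∀ p ∈ forbiddenPatterns, ¬ C.HasPattern p) ∧
  ((∃ x : C.V, C.IsBad x) → ∃ p ∈ badPatterns, ∃ m v, C.IsBadPartChain p m v)

end Config

/-- The standard inner product on `ℤ^N`. -/
def dot {N : ℕ} (x y : Fin N → ℤ) : ℤ := ∑ i, x i * y i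

/-- The support of a vector of `ℤ^N` with respect to the standard orthonormal basis. -/
def supp {N : ℕ} (x : Fin N → ℤ) : Finset (Fin N) :=
  Finset.univ.filter fun i => x i ≠ 0

namespace Config

/-- An embedding of a configuration into `ℤ^N`. -/
def IsEmbedding (C : Config) (N : ℕ) (φ : C.V → Fin N → ℤ) : Prop :=
  ∀ u v : C.V, dot (φ u) (φ v) =
    if u = v then C.w u else if C.graph.Adj u v then -1 else 0

/-- The restriction of `φ` to `S` is standard. -/
def IsStandardOn (C : Config) (N : ℕ) (φ : C.V → Fin N → ℤ) (S : Set C.V) : Prop :=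
  ∀ u ∈ S, ∀ v ∈ S,
    ((supp (φ u) ∩ supp (φ v)).card : ℤ) =
      if u = v then C.w v else if C.graph.Adj u v then 1 else 0

/-- A standard embedding. -/
def IsStandard (C : Config) (N : ℕ) (φ : C.V → Fin N → ℤ) : Prop :=
  C.IsStandardOn N φ Set.univ

/-- The restriction of `φ` to `S` is semi-standard at `x`. -/
def IsSemiStandardAtOn (C : Config) (N : ℕ) (φ : C.V → Fin N → ℤ) (x : C.V)
    (S : Set C.V) : Prop :=
  (∀ u ∈ S, ∀ v ∈ S,
    ((supp (φ u) ∩ supp (φ v)).card : ℤ) =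
      if u = v then C.w v
      else if C.graph.Adj u v then 1
      else if C.graph.Adj x u ∧ C.graph.Adj x v then 2
      else 0) ∧
  (∀ u ∈ S, ∀ v ∈ S, u ≠ v → C.graph.Adj x u → C.graph.Adj x v →
    (supp (φ u) ∩ supp (φ x) ∩ supp (φ v)).card = 1)

/-- A semi-standard embedding: semi-standard at some bad vertex. -/
def IsSemiStandard (C : Config) (N : ℕ) (φ : C.V → Fin N → ℤ) : Prop :=
  ∃ x : C.V, C.IsBad x ∧ C.IsSemiStandardAtOn N φ x Set.univ

/-- A candidate for the extended bad part: a chain containing the bad part whose two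
ends are either leaves or preceded by two consecutive vertices of vanishing adjusted
weight. -/
def IsEBPCand (C : Config) (m : ℕ) (v : ℕ → C.V) : Prop :=
  C.IsChain m v ∧
  (∀ p ∈ badPatterns, ∀ mb vb, C.IsBadPartChain p mb vb →
     ∀ i ≤ mb, ∃ j ≤ m, v j = vb i) ∧
  (C.IsLeaf (v 0) ∨ (2 ≤ m ∧ C.adjw (v 1) = 0 ∧ C.adjw (v 2) = 0)) ∧
  (C.IsLeaf (v m) ∨ (2 ≤ m ∧ C.adjw (v (m - 1)) = 0 ∧ C.adjw (v (m - 2)) = 0))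

/-- The extended bad part: a candidate with the fewest vertices. -/
def IsExtBadPart (C : Config) (m : ℕ) (v : ℕ → C.V) : Prop :=
  C.IsEBPCand m v ∧ ∀ m' v', C.IsEBPCand m' v' → m ≤ m'

/-- The set of vertices of the chain `v 0, …, v m`. -/
def ebpSet (C : Config) (m : ℕ) (v : ℕ → C.V) : Set C.V := {y | ∃ i ≤ m, v i = y}

/-- The outside part of `Γ` relative to the extended bad part `v 0, …, v m`. -/
def OutsidePart (C : Config) (m : ℕ) (v : ℕ → C.V) : Set C.V :=
  {x | ∀ i ≤ m, v i ≠ x}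
  ∪ {x | ¬ C.IsLeaf (v 0) ∧ (x = v 0 ∨ x = v 1 ∨ x = v 2)}
  ∪ {x | ¬ C.IsLeaf (v m) ∧ (x = v m ∨ x = v (m - 1) ∨ x = v (m - 2))}

/-- A screw at the front end of the extended bad part. -/
def IsFrontScrew (C : Config) (N : ℕ) (φ : C.V → Fin N → ℤ) (m : ℕ) (v : ℕ → C.V)
    (e : Fin N) : Prop :=
  ¬ C.IsLeaf (v 0) ∧ 3 ≤ m ∧ φ (v 2) e ≠ 0 ∧ φ (v 3) e ≠ 0

/-- A screw at the back end of the extended bad part. -/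
def IsBackScrew (C : Config) (N : ℕ) (φ : C.V → Fin N → ℤ) (m : ℕ) (v : ℕ → C.V)
    (e : Fin N) : Prop :=
  ¬ C.IsLeaf (v m) ∧ 3 ≤ m ∧ φ (v (m - 2)) e ≠ 0 ∧ φ (v (m - 3)) e ≠ 0

/-- All screws of `Γ` (with respect to `φ`) are clean. -/
def AllScrewsClean (C : Config) (N : ℕ) (φ : C.V → Fin N → ℤ) (m : ℕ)
    (v : ℕ → C.V) : Prop :=
  (∀ e : Fin N, C.IsFrontScrew N φ m v e →
    ∀ u : C.V, u ≠ v 2 → u ≠ v 3 → φ u e = 0) ∧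
  (∀ e : Fin N, C.IsBackScrew N φ m v e →
    ∀ u : C.V, u ≠ v (m - 2) → u ≠ v (m - 3) → φ u e = 0)

end Config

/-!
Write `z₂, z₃, z₄, …` for `v₃, v₂, v₁, …`, continued past `v₀` to a leaf. The vertices `z₄` and `z₃`
have weight two, so their vectors are `f₀ - f₁` and `f₁ - f₂` for an orthonormal system of signed
basis vectors. A vertex orthogonal to both has equal coordinates along `f₀, f₁, f₂`. If such a
coordinate is nonzero at a vertex off `z₁, …, z₅`, that vertex is the heavy one sought.

Otherwise only `z₂`, `z₅` and `z₁` meet the system besides `z₃` and `z₄`, with one integer parameter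
each. Splitting off the three coordinates leaves vectors whose Gram matrix depends on the weights
and the parameters `α, β, c`. Positivity of norms cuts the parameters down to a few values. For most
nonzero choices some combination of two of these vectors has nonpositive norm and hence vanishes,
against its nonzero product with a neighbour. In the remaining three cases the Gram matrix contains
that of a linear chain, which the Working Conditions allow to be blown down to one with a
nonpositive weight, so it is not positive semidefinite. Hence all parameters are zero, the screw is
`±f₂`, and it is clean.
-/

section Lattice

variable {N : ℕ}

theorem dot_comm (x y : Fin N → ℤ) : dot x y = dot y x := dotProduct_comm x y

theorem dot_add (x y u : Fin N → ℤ) : dot x (y + u) = dot x y + dot x u :=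
  dotProduct_add x y u

theorem dot_smul (n : ℤ) (x y : Fin N → ℤ) : dot x (n • y) = n * dot x y :=
  dotProduct_smul n x y

theorem dot_self_add (x y : Fin N → ℤ) :
    dot (x + y) (x + y) = dot x x + 2 * dot x y + dot y y := by
  rw [dot_add, dot_comm _ x, dot_comm _ y, dot_add, dot_add, dot_comm y x]
  ring

theorem dot_self_nonneg (x : Fin N → ℤ) : 0 ≤ dot x x :=
  Finset.sum_nonneg fun i _ => mul_self_nonneg (x i)

theorem dot_sq_le (x y : Fin N → ℤ) : dot x y ^ 2 ≤ dot x x * dot y y := by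
  simpa only [dot, sq] using Finset.sum_mul_sq_le_sq_mul_sq Finset.univ x y

theorem dot_eq_zero_of_dot_self_nonpos {x : Fin N → ℤ} (hx : dot x x ≤ 0) (y : Fin N → ℤ) :
    dot x y = 0 := by
  have hxx : dot x x = 0 := le_antisymm hx (dot_self_nonneg x)
  have hsq := dot_sq_le x y
  rw [hxx, zero_mul] at hsq
  exact pow_eq_zero_iff two_ne_zero |>.1 (le_antisymm hsq (sq_nonneg _))

theorem dot_add_smul_eq_zero_of_nonpos {x y : Fin N → ℤ} {k : ℤ}
    (h : dot x x + 2 * k * dot x y + k ^ 2 * dot y y ≤ 0) (u : Fin N → ℤ) :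
    dot u x + k * dot u y = 0 := by
  rw [← dot_smul, ← dot_add, dot_comm]
  refine dot_eq_zero_of_dot_self_nonpos ?_ u
  rw [dot_self_add, dot_smul, dot_smul, dot_comm (k • y) y, dot_smul]
  linarith

theorem sq_le_dot_self (x : Fin N → ℤ) (i : Fin N) : x i ^ 2 ≤ dot x x := by
  rw [sq]
  exact Finset.single_le_sum (f := fun j => x j * x j) (fun j _ => mul_self_nonneg (x j))
    (Finset.mem_univ i)

theorem abs_le_one_of_sq_lt_four {n : ℤ} (h : n ^ 2 < 4) : |n| ≤ 1 := by
  have : |n| < 2 := abs_lt_of_sq_lt_sq (by simpa using h) (by norm_num)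
  omega

theorem abs_le_one_of_dot_self_lt_four {x : Fin N → ℤ} (hx : dot x x < 4) (i : Fin N) :
    |x i| ≤ 1 :=
  abs_le_one_of_sq_lt_four ((sq_le_dot_self x i).trans_lt hx)

theorem mem_supp {x : Fin N → ℤ} {i : Fin N} : i ∈ supp x ↔ x i ≠ 0 := by
  simp [supp]

theorem card_supp_eq_dot_self {x : Fin N → ℤ} (hx : ∀ i, |x i| ≤ 1) :
    ((supp x).card : ℤ) = dot x x := by
  rw [supp, Finset.card_filter, dot, Nat.cast_sum]
  refine Finset.sum_congr rfl fun i _ => ?_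
  obtain h | h | h : x i = -1 ∨ x i = 0 ∨ x i = 1 := by have := abs_le.1 (hx i); omega
  all_goals simp [h]

theorem two_dvd_card_supp_inter_sub_dot {x y : Fin N → ℤ} (hx : ∀ i, |x i| ≤ 1)
    (hy : ∀ i, |y i| ≤ 1) : 2 ∣ ((supp x ∩ supp y).card : ℤ) - dot x y := by
  rw [supp, supp, ← Finset.filter_and, Finset.card_filter, dot, Nat.cast_sum,
    ← Finset.sum_sub_distrib]
  refine Finset.dvd_sum fun i _ => ?_
  obtain h | h | h : x i = -1 ∨ x i = 0 ∨ x i = 1 := by have := abs_le.1 (hx i); omega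
  all_goals
    obtain h' | h' | h' : y i = -1 ∨ y i = 0 ∨ y i = 1 := by have := abs_le.1 (hy i); omega
    all_goals simp [h, h']

theorem card_supp_inter_eq_two {x y : Fin N → ℤ} (hx : ∀ i, |x i| ≤ 1) (hy : dot y y < 4)
    (hxy : dot x y = 0) {i : Fin N} (hxi : x i ≠ 0) (hyi : y i ≠ 0) :
    (supp x ∩ supp y).card = 2 := by
  have hy' := abs_le_one_of_dot_self_lt_four hy
  have heven := two_dvd_card_supp_inter_sub_dot hx hy'
  have hpos : 0 < (supp x ∩ supp y).card :=
    Finset.card_pos.2 ⟨i, Finset.mem_inter.2 ⟨mem_supp.2 hxi, mem_supp.2 hyi⟩⟩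
  have hle : (supp x ∩ supp y).card ≤ (supp y).card :=
    Finset.card_le_card Finset.inter_subset_right
  have hcard := card_supp_eq_dot_self hy'
  omega

end Lattice

/-- A family of distinct standard basis vectors of `ℤ^N`, each with a choice of sign: an
orthonormal system `sign k • e_(index k)`. -/
structure SignedFrame (ι : Type*) (N : ℕ) where
  index : ι ↪ Fin N
  sign : ι → ℤˣ

namespace SignedFrame

variable {ι : Type*} {N : ℕ} (F : SignedFrame ι N)

/-- The coordinate of `x` along the `k`-th vector of the frame. -/
def coord (k : ι) (x : Fin N → ℤ) : ℤ := F.sign k * x (F.index k)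

theorem coord_eq_zero_iff {k : ι} {x : Fin N → ℤ} : F.coord k x = 0 ↔ x (F.index k) = 0 := by
  simp [coord]

theorem sq_coord (k : ι) (x : Fin N → ℤ) :
    F.coord k x ^ 2 = x (F.index k) ^ 2 := by
  rw [coord, mul_pow, ← Units.val_pow_eq_pow_val, Int.units_sq, Units.val_one, one_mul]

variable [Fintype ι]

/-- The component of `x` orthogonal to the frame. -/
def residue (x : Fin N → ℤ) : Fin N → ℤ := fun j => if ∃ k, F.index k = j then 0 else x j

theorem dot_eq_sum_coord_add_dot_residue (x y : Fin N → ℤ) :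
    dot x y = ∑ k, F.coord k x * F.coord k y + dot (F.residue x) (F.residue y) := by
  have hcoord (k : ι) : F.coord k x * F.coord k y = x (F.index k) * y (F.index k) := by
    rw [coord, coord, mul_mul_mul_comm, ← Units.val_mul, Int.units_mul_self, Units.val_one,
      one_mul]
  have hresidue : dot (F.residue x) (F.residue y) =
      ∑ j ∈ (Finset.univ.map F.index)ᶜ, x j * y j := by
    rw [dot, Finset.compl_eq_univ_sdiff, ← Finset.filter_notMem_eq_sdiff, Finset.sum_filter]
    refine Finset.sum_congr rfl fun j _ => ?_
    by_cases hj : ∃ k, F.index k = j <;> simp [residue, hj]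
  rw [hresidue, dot, ← Finset.sum_add_sum_compl (Finset.univ.map F.index), Finset.sum_map]
  simp only [hcoord]

theorem dot_residue (x y : Fin N → ℤ) :
    dot (F.residue x) (F.residue y) = dot x y - ∑ k, F.coord k x * F.coord k y := by
  rw [F.dot_eq_sum_coord_add_dot_residue x y, add_sub_cancel_left]

theorem sum_coord_sq_le (x : Fin N → ℤ) : ∑ k, F.coord k x ^ 2 ≤ dot x x := by
  have h := dot_self_nonneg (F.residue x)
  simp only [F.dot_residue, ← sq] at h
  linarith

theorem sum_coord_sq_add_sq_le (x : Fin N → ℤ) {j : Fin N} (hj : ∀ k, F.index k ≠ j) :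
    ∑ k, F.coord k x ^ 2 + x j ^ 2 ≤ dot x x := by
  have h := sq_le_dot_self (F.residue x) j
  rw [F.dot_residue, residue, if_neg (not_exists.2 hj)] at h
  simp only [← sq] at h
  linarith

theorem abs_apply_le_one_of_coord_eq {F : SignedFrame (Fin 3) N} {x : Fin N → ℤ} {c : ℤ}
    (hcoord : ∀ k, F.coord k x = c) (hc : c ≠ 0)
    (hx : dot x x < 6) (i : Fin N) : |x i| ≤ 1 := by
  have hc' : 0 < c ^ 2 := sq_pos_of_ne_zero hc
  refine abs_le_one_of_sq_lt_four ?_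
  by_cases hi : ∃ k, F.index k = i
  · obtain ⟨k, rfl⟩ := hi
    have hsq := F.sum_coord_sq_le x
    simp only [hcoord, Fin.sum_univ_three] at hsq
    rw [← F.sq_coord, hcoord]
    omega
  · have hsq := F.sum_coord_sq_add_sq_le x (not_exists.1 hi)
    simp only [hcoord, Fin.sum_univ_three] at hsq
    omega

end SignedFrame

theorem dot_eq_of_supp_eq_pair {N : ℕ} {y : Fin N → ℤ} {i j : Fin N} (hij : i ≠ j)
    (hy : supp y = {i, j}) (x : Fin N → ℤ) : dot x y = x i * y i + x j * y j := by
  rw [dot, ← Finset.sum_pair (f := fun k => x k * y k) hij, ← hy]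
  refine (Finset.sum_subset (Finset.subset_univ _) fun k _ hk => ?_).symm
  rw [not_not.1 (mem_supp.not.1 hk), mul_zero]

/-- `x = f₀ - f₁` and `y = f₁ - f₂` for the vectors `f₀, f₁, f₂` of the frame, stated through the
products of `x` and `y` with all vectors. -/
def SignedFrame.IsAdapted {N : ℕ} (F : SignedFrame (Fin 3) N) (x y : Fin N → ℤ) : Prop :=
  (∀ u, dot u x = F.coord 0 u - F.coord 1 u) ∧ ∀ u, dot u y = F.coord 1 u - F.coord 2 u

theorem exists_unit_eq_of_abs_le_one {n : ℤ} (hn : n ≠ 0) (h : |n| ≤ 1) :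
    ∃ s : ℤˣ, (s : ℤ) = n := by
  obtain h' | h' : n = 1 ∨ n = -1 := by have := abs_le.1 h; omega
  · exact ⟨1, h'.symm⟩
  · exact ⟨-1, h'.symm⟩

theorem exists_supp_eq_pair {N : ℕ} {x y : Fin N → ℤ} (hx : dot x x = 2) (hy : dot y y = 2)
    (hxy : dot x y = -1) :
    ∃ i j k, i ≠ j ∧ i ≠ k ∧ j ≠ k ∧ supp x = {i, j} ∧ supp y = {j, k} := by
  have hx' := abs_le_one_of_dot_self_lt_four (x := x) (by omega)
  have hy' := abs_le_one_of_dot_self_lt_four (x := y) (by omega)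
  have hcx := card_supp_eq_dot_self hx'
  have hcy := card_supp_eq_dot_self hy'
  have hinter : (supp x ∩ supp y).card = 1 := by
    have hodd := two_dvd_card_supp_inter_sub_dot hx' hy'
    have hle : (supp x ∩ supp y).card ≤ (supp x).card :=
      Finset.card_le_card Finset.inter_subset_left
    omega
  obtain ⟨j, hj⟩ := Finset.card_eq_one.1 hinter
  have hmem : j ∈ supp x ∩ supp y := by rw [hj]; exact Finset.mem_singleton_self j
  obtain ⟨hjx, hjy⟩ := Finset.mem_inter.1 hmem
  obtain ⟨i, hi⟩ : ∃ i, (supp x).erase j = {i} :=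
    Finset.card_eq_one.1 (by rw [Finset.card_erase_of_mem hjx]; omega)
  obtain ⟨k, hk⟩ : ∃ k, (supp y).erase j = {k} :=
    Finset.card_eq_one.1 (by rw [Finset.card_erase_of_mem hjy]; omega)
  have hi' : i ∈ (supp x).erase j := by simp [hi]
  have hk' : k ∈ (supp y).erase j := by simp [hk]
  rw [Finset.mem_erase] at hi' hk'
  refine ⟨i, j, k, hi'.1, ?_, hk'.1.symm, ?_, ?_⟩
  · rintro rfl
    have : i ∈ supp x ∩ supp y := Finset.mem_inter.2 ⟨hi'.2, hk'.2⟩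
    rw [hj, Finset.mem_singleton] at this
    exact hi'.1 this
  · rw [Finset.pair_comm, ← hi, Finset.insert_erase hjx]
  · rw [← hk, Finset.insert_erase hjy]

theorem exists_isAdapted {N : ℕ} {x y : Fin N → ℤ} (hx : dot x x = 2) (hy : dot y y = 2)
    (hxy : dot x y = -1) : ∃ F : SignedFrame (Fin 3) N, F.IsAdapted x y := by
  obtain ⟨i, j, k, hij, hik, hjk, hsx, hsy⟩ := exists_supp_eq_pair hx hy hxy
  have hx' := abs_le_one_of_dot_self_lt_four (x := x) (by omega)
  have hy' := abs_le_one_of_dot_self_lt_four (x := y) (by omega)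
  have hyi : y i = 0 := by
    by_contra h
    have : i ∈ supp y := mem_supp.2 h
    simp [hsy, hij, hik] at this
  have hprod : x j * y j = -1 := by
    rw [← hxy, dot_comm, dot_eq_of_supp_eq_pair hij hsx, hyi]
    ring
  obtain ⟨s, hs⟩ := exists_unit_eq_of_abs_le_one (mem_supp.1 (by simp [hsx])) (hx' i)
  obtain ⟨t, ht⟩ := exists_unit_eq_of_abs_le_one (mem_supp.1 (by simp [hsy])) (hy' j)
  obtain ⟨r, hr⟩ := exists_unit_eq_of_abs_le_one (mem_supp.1 (by simp [hsy])) (hy' k)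
  have hxj : x j = -t := by
    rw [← ht] at hprod
    calc
      x j = x j * (t * t) := by rw [← Units.val_mul, Int.units_mul_self, Units.val_one, mul_one]
      _ = -t := by rw [← mul_assoc, hprod, neg_one_mul]
  have hinj : Function.Injective ![i, j, k] := by
    intro p q hpq
    fin_cases p <;> fin_cases q <;> simp_all
  refine ⟨⟨⟨![i, j, k], hinj⟩, ![s, t, -r]⟩, fun u => ?_, fun u => ?_⟩
  · rw [dot_eq_of_supp_eq_pair hij hsx, hxj, ← hs]
    simp only [mul_neg, SignedFrame.coord, Fin.isValue, Matrix.cons_val_zero,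
      Function.Embedding.coeFn_mk, Matrix.cons_val_one]
    ring
  · rw [dot_eq_of_supp_eq_pair hjk hsy, ← ht, ← hr]
    simp only [SignedFrame.coord, Fin.isValue, Matrix.cons_val_one, Matrix.cons_val_zero,
      Function.Embedding.coeFn_mk, Matrix.cons_val, Units.val_neg, neg_mul, sub_neg_eq_add]
    ring

namespace SignedFrame.IsAdapted

variable {N : ℕ} {F : SignedFrame (Fin 3) N} {x y : Fin N → ℤ}

theorem coord_left (hF : F.IsAdapted x y) (hx : dot x x = 2) (hxy : dot x y = -1) :
    F.coord 0 x = 1 ∧ F.coord 1 x = -1 ∧ F.coord 2 x = 0 := by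
  have h0 := hF.1 x
  have h2 := hF.2 x
  have hsq := F.sum_coord_sq_le x
  rw [Fin.sum_univ_three] at hsq
  have hle : F.coord 1 x < 0 := by nlinarith
  have hge : -2 < F.coord 1 x := by nlinarith
  omega

theorem coord_right (hF : F.IsAdapted x y) (hy : dot y y = 2) (hxy : dot x y = -1) :
    F.coord 0 y = 0 ∧ F.coord 1 y = 1 ∧ F.coord 2 y = -1 := by
  have h0 := hF.1 y
  have h2 := hF.2 y
  rw [dot_comm] at h0
  have hsq := F.sum_coord_sq_le y
  rw [Fin.sum_univ_three] at hsq
  have hle : F.coord 1 y < 2 := by nlinarith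
  have hge : 0 < F.coord 1 y := by nlinarith
  omega

theorem eq_index_of_apply_ne_zero (hF : F.IsAdapted x y) (hy : dot y y = 2) (hxy : dot x y = -1)
    {e : Fin N}
    (he : y e ≠ 0) : e = F.index 1 ∨ e = F.index 2 := by
  obtain ⟨h0, h1, h2⟩ := hF.coord_right hy hxy
  by_cases h : ∃ k, F.index k = e
  · obtain ⟨k, rfl⟩ := h
    fin_cases k
    · exact (he (F.coord_eq_zero_iff.1 h0)).elim
    · exact .inl rfl
    · exact .inr rfl
  · have hsq := F.sum_coord_sq_add_sq_le y (not_exists.1 h)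
    rw [Fin.sum_univ_three, h0, h1, h2] at hsq
    have := sq_pos_of_ne_zero he
    omega

end SignedFrame.IsAdapted

section BlowDown

/-- `IsChainValue l t v` says that the quadratic form `∑ nᵢ tᵢ² - 2 ∑ tᵢ tᵢ₊₁` of the linear chain
with weights `l` takes the value `v` at an integer vector whose first coordinate is `t`. -/
inductive IsChainValue : List ℤ → ℤ → ℤ → Prop
  | nil : IsChainValue [] 0 0
  | cons {l : List ℤ} {s v : ℤ} (n t : ℤ) (h : IsChainValue l s v) :
      IsChainValue (n :: l) t (n * t ^ 2 - 2 * t * s + v)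

theorem isChainValue_zero (l : List ℤ) : IsChainValue l 0 0 := by
  induction l with
  | nil => exact .nil
  | cons n l ih => simpa using ih.cons n 0

/-- The quadratic form of the linear chain with weights `l.reverse ++ r` is positive semidefinite.
The chain is split at an edge, the focus, where its weights get blown down. -/
def LinearSemidef (l r : List ℤ) : Prop :=
  ∀ ⦃s v t u⦄, IsChainValue l s v → IsChainValue r t u → 0 ≤ v + u - 2 * s * t

namespace LinearSemidef

variable {l r : List ℤ} {n p q : ℤ}

theorem symm (h : LinearSemidef l r) : LinearSemidef r l := fun s v t u hl hr => by
  have := h hr hl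
  linarith

-- The coefficients `a, a + b, b` turn the form of `…, p, n, q, …` into that of
-- `…, p - 1, q - 1, …`.
theorem blowDown_right (h : LinearSemidef (p :: l) (n :: q :: r)) (hn : n ≤ 1) :
    LinearSemidef ((p - 1) :: l) ((q - 1) :: r) := by
  intro a v b u hl hr
  cases hl with
  | cons _ _ hl =>
    cases hr with
    | cons _ _ hr =>
      have := h (hl.cons p a) ((hr.cons q b).cons n (a + b))
      have := mul_nonneg (sub_nonneg.2 hn) (sq_nonneg (a + b))
      linarith

theorem blowDown_left (h : LinearSemidef (n :: p :: l) (q :: r)) (hn : n ≤ 1) :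
    LinearSemidef ((p - 1) :: l) ((q - 1) :: r) :=
  (h.symm.blowDown_right hn).symm

theorem pos_right (h : LinearSemidef (p :: l) (n :: r)) : 0 < n := by
  by_contra! hn
  have hform := h ((isChainValue_zero l).cons p 1) ((isChainValue_zero r).cons n (|p| + 1))
  have hterm := mul_nonneg (neg_nonneg.2 hn) (sq_nonneg (|p| + 1))
  linarith [le_abs_self p, abs_nonneg p]

theorem pos_left (h : LinearSemidef (n :: l) (q :: r)) : 0 < n := h.symm.pos_right

end LinearSemidef

variable {N : ℕ}

/-- `u` pairs to `c` with the first vector of the list `X` and is orthogonal to the others. -/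
def MeetsOnlyHead (u : Fin N → ℤ) (c : ℤ) (X : List (Fin N → ℤ)) : Prop :=
  (∀ x ∈ X.head?, dot u x = c) ∧ ∀ x ∈ X.tail, dot u x = 0

theorem meetsOnlyHead_cons {u x : Fin N → ℤ} {c : ℤ} {X : List (Fin N → ℤ)} :
    MeetsOnlyHead u c (x :: X) ↔ dot u x = c ∧ ∀ y ∈ X, dot u y = 0 := by
  simp [MeetsOnlyHead]

theorem meetsOnlyHead_zero {u : Fin N → ℤ} {X : List (Fin N → ℤ)} (h : ∀ x ∈ X, dot u x = 0) :
    MeetsOnlyHead u 0 X :=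
  ⟨fun x hx => h x (List.mem_of_mem_head? hx), fun x hx => h x (List.mem_of_mem_tail hx)⟩

/-- A list of vectors whose Gram matrix is that of a linear chain: consecutive vectors have product
`-1`, all other pairs of distinct entries are orthogonal. -/
def IsVectorChain : List (Fin N → ℤ) → Prop
  | [] => True
  | x :: X => MeetsOnlyHead x (-1) X ∧ IsVectorChain X

theorem IsVectorChain.exists_dot_self_eq {X : List (Fin N → ℤ)} {s v : ℤ} (hX : IsVectorChain X)
    (h : IsChainValue (X.map fun x => dot x x) s v) :
    ∃ z, dot z z = v ∧ ∀ u c, MeetsOnlyHead u c X → dot u z = c * s := by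
  induction X generalizing s v with
  | nil =>
    cases h
    exact ⟨0, by simp [dot], by simp [dot]⟩
  | cons x X ih =>
    cases h with
    | cons _ _ h =>
      obtain ⟨z, hz, hu⟩ := ih hX.2 h
      refine ⟨s • x + z, ?_, fun u c huX => ?_⟩
      · rw [dot_self_add, dot_smul, dot_comm (s • x), dot_comm (s • x), dot_smul, dot_smul,
          dot_comm z, hu x _ hX.1, hz]
        ring
      · rw [meetsOnlyHead_cons] at huX
        rw [dot_add, dot_smul, huX.1, hu u 0 (meetsOnlyHead_zero huX.2)]
        ring

theorem LinearSemidef.of_isVectorChain {x y : Fin N → ℤ} {X Y : List (Fin N → ℤ)}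
    (hX : IsVectorChain (x :: X)) (hY : IsVectorChain (y :: Y))
    (hxy : MeetsOnlyHead x (-1) (y :: Y)) (hXY : ∀ u ∈ X, ∀ z ∈ y :: Y, dot u z = 0) :
    LinearSemidef ((x :: X).map fun x => dot x x) ((y :: Y).map fun x => dot x x) := by
  intro s v t u hv hu
  obtain ⟨a, ha, haX⟩ := hX.exists_dot_self_eq hv
  obtain ⟨b, hb, hbY⟩ := hY.exists_dot_self_eq hu
  have hb_meets : MeetsOnlyHead b (-t) (x :: X) := by
    refine meetsOnlyHead_cons.2 ⟨?_, fun u hu => ?_⟩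
    · rw [dot_comm, hbY x _ hxy, neg_one_mul]
    · rw [dot_comm, hbY u 0 (meetsOnlyHead_zero (hXY u hu)), zero_mul]
  have hnorm := dot_self_nonneg (a + b)
  rw [dot_self_add, ha, hb, dot_comm a, haX b _ hb_meets] at hnorm
  linarith

theorem isVectorChain_map_range' {X : ℕ → Fin N → ℤ} {a n : ℕ}
    (hsucc : ∀ i, a ≤ i → i + 1 < a + n → dot (X i) (X (i + 1)) = -1)
    (hfar : ∀ i j, a ≤ i → i + 2 ≤ j → j < a + n → dot (X i) (X j) = 0) :
    IsVectorChain ((List.range' a n).map X) := by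
  induction n generalizing a with
  | zero => trivial
  | succ n ih =>
    refine ⟨?_, ih (fun i hi hin => hsucc i (by omega) (by omega))
      fun i j hi hij hj => hfar i j (by omega) hij (by omega)⟩
    cases n with
    | zero => exact ⟨by simp, by simp⟩
    | succ n =>
      refine meetsOnlyHead_cons.2 ⟨hsucc a le_rfl (by omega), fun y hy => ?_⟩
      obtain ⟨j, hj, rfl⟩ := List.mem_map.1 hy
      rw [List.mem_range'_1] at hj
      exact hfar a j le_rfl (by omega) (by omega)

end BlowDown

namespace Config

variable {C : Config} {m : ℕ} {v : ℕ → C.V}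

theorem eq_or_eq_of_adj_of_ne (hdeg : ∀ x, C.deg x ≤ 2) {x a b y : C.V} (ha : C.graph.Adj x a)
    (hb : C.graph.Adj x b) (hab : a ≠ b) (hy : C.graph.Adj x y) : y = a ∨ y = b := by
  by_contra! h
  exact (hdeg x).not_gt ((Set.two_lt_ncard_iff (s := C.graph.neighborSet x)).2
    ⟨a, b, y, ha, hb, hy, hab, h.1.symm, h.2.symm⟩)

theorem two_le_deg {x a b : C.V} (ha : C.graph.Adj x a) (hb : C.graph.Adj x b) (hab : a ≠ b) :
    2 ≤ C.deg x :=
  (Set.one_lt_ncard_iff (s := C.graph.neighborSet x)).2 ⟨a, b, ha, hb, hab⟩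

theorem one_le_deg {x a : C.V} (ha : C.graph.Adj x a) : 1 ≤ C.deg x :=
  (Set.ncard_pos (s := C.graph.neighborSet x)).2 ⟨a, ha⟩

theorem adjw_nonneg (hdeg : ∀ x, C.deg x ≤ 2) (hw : ∀ x, 2 ≤ C.w x) (x : C.V) : 0 ≤ C.adjw x := by
  have := hdeg x
  have := hw x
  unfold adjw
  omega

theorem not_isBad_of_adj_of_adjw_eq_zero (hdeg : ∀ x, C.deg x ≤ 2) {x y : C.V}
    (hxy : C.graph.Adj x y)
    (hy : C.adjw y = 0) : ¬ C.IsBad x := by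
  rintro ⟨a, b, hab, ha, hb, hwa, hwb⟩
  obtain rfl | rfl := eq_or_eq_of_adj_of_ne hdeg ha hb hab hxy <;> omega

namespace IsChain

theorem adj (h : C.IsChain m v) {i j : ℕ} (hij : j = i + 1) (hj : j ≤ m) :
    C.graph.Adj (v i) (v j) := by
  subst hij
  exact h.2 i hj

theorem ne (h : C.IsChain m v) {i j : ℕ} (hi : i ≤ m) (hj : j ≤ m) (hij : i ≠ j) : v i ≠ v j :=
  fun heq => hij (h.1 i hi j hj heq)

theorem shift (h : C.IsChain m v) {s n : ℕ} (hs : s + n ≤ m) : C.IsChain n fun k => v (s + k) :=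
  ⟨fun i hi j hj hij => by have := h.1 _ (by omega) _ (by omega) hij; omega,
    fun i hi => h.adj (by omega) (by omega)⟩

theorem reverse (h : C.IsChain m v) : C.IsChain m fun k => v (m - k) :=
  ⟨fun i hi j hj hij => by have := h.1 _ (by omega) _ (by omega) hij; omega,
    fun i hi => (h.adj (by omega) (by omega)).symm⟩

theorem snoc (h : C.IsChain m v) {x : C.V} (hx : ∀ i ≤ m, v i ≠ x) (hadj : C.graph.Adj (v m) x) :
    C.IsChain (m + 1) (Function.update v (m + 1) x) := by
  have hold {i : ℕ} (hi : i ≤ m) : Function.update v (m + 1) x i = v i :=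
    Function.update_of_ne (by omega : i ≠ m + 1) ..
  have hnew : Function.update v (m + 1) x (m + 1) = x := Function.update_self ..
  refine ⟨fun i hi j hj hij => ?_, fun i hi => ?_⟩
  · obtain hi | rfl := Nat.le_succ_iff.1 hi <;> obtain hj | rfl := Nat.le_succ_iff.1 hj
    · rw [hold hi, hold hj] at hij
      exact h.1 i hi j hj hij
    · rw [hold hi, hnew] at hij
      exact absurd hij (hx i hi)
    · rw [hold hj, hnew] at hij
      exact absurd hij.symm (hx j hj)
    · rfl
  · obtain hi | rfl := Nat.lt_succ_iff_lt_or_eq.1 hi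
    · rw [hold hi.le, hold hi]
      exact h.2 i hi
    · rwa [hold le_rfl, hnew]

theorem exists_isPath (h : C.IsChain m v) : ∃ p : C.graph.Walk (v 0) (v m),
    p.IsPath ∧ p.length = m ∧ ∀ x ∈ p.support, ∃ i ≤ m, v i = x := by
  induction m with
  | zero => exact ⟨.nil, .nil, rfl, fun x hx => ⟨0, le_rfl, (List.mem_singleton.1 hx).symm⟩⟩
  | succ m ih =>
    obtain ⟨p, hp, hlen, hsupp⟩ := ih
      ⟨fun i hi j hj => h.1 i (by omega) j (by omega), fun i hi => h.2 i (by omega)⟩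
    have hnew : v (m + 1) ∉ p.support := fun hmem => by
      obtain ⟨i, hi, heq⟩ := hsupp _ hmem
      exact h.ne (by omega) le_rfl (by omega) heq
    refine ⟨p.concat (h.2 m (by omega)), hp.concat hnew _, by simp [hlen], fun x hx => ?_⟩
    rw [SimpleGraph.Walk.support_concat, List.mem_append, List.mem_singleton] at hx
    obtain hx | rfl := hx
    · obtain ⟨i, hi, heq⟩ := hsupp x hx
      exact ⟨i, by omega, heq⟩
    · exact ⟨m + 1, le_rfl, rfl⟩

-- An edge and the chain segment between its ends are both paths, so they coincide.
theorem eq_succ_of_adj (h : C.IsChain m v) (hac : C.graph.IsAcyclic) {i j : ℕ} (hij : i < j)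
    (hj : j ≤ m) (hadj : C.graph.Adj (v i) (v j)) : j = i + 1 := by
  obtain ⟨n, rfl⟩ : ∃ n, j = i + n := ⟨j - i, by omega⟩
  obtain ⟨p, hp, hlen, -⟩ := (h.shift hj).exists_isPath
  have hedge : hadj.toWalk.IsPath := SimpleGraph.Walk.IsPath.of_adj hadj
  have heq : p = hadj.toWalk := congrArg Subtype.val
    ((hac.subsingleton_path _ _).elim ⟨p, hp⟩ ⟨_, hedge⟩)
  rw [heq] at hlen
  simpa using hlen.symm

theorem not_adj (h : C.IsChain m v) (hac : C.graph.IsAcyclic) {i j : ℕ} (hij : i + 2 ≤ j)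
    (hj : j ≤ m) : ¬ C.graph.Adj (v i) (v j) := fun hadj => by
  have := h.eq_succ_of_adj hac (by omega) hj hadj
  omega

theorem eq_or_eq_of_adj (h : C.IsChain m v) (hdeg : ∀ x, C.deg x ≤ 2) {i : ℕ} {x : C.V}
    (hi : i + 2 ≤ m) (hx : C.graph.Adj (v (i + 1)) x) : x = v i ∨ x = v (i + 2) :=
  eq_or_eq_of_adj_of_ne hdeg (h.2 i (by omega)).symm (h.2 (i + 1) (by omega))
    (h.ne (by omega) (by omega) (by omega)) hx

theorem deg_eq_two (h : C.IsChain m v) (hdeg : ∀ x, C.deg x ≤ 2) {i : ℕ} (hi : i + 2 ≤ m) :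
    C.deg (v (i + 1)) = 2 :=
  le_antisymm (hdeg _) (two_le_deg (h.2 i (by omega)).symm (h.2 (i + 1) (by omega))
    (h.ne (by omega) (by omega) (by omega)))

theorem card_lt (h : C.IsChain m v) : m < Fintype.card C.V := by
  have hinj : Function.Injective fun i : Fin (m + 1) => v i := fun i j hij =>
    Fin.ext (h.1 i (by omega) j (by omega) hij)
  simpa using Fintype.card_le_of_injective _ hinj

theorem exists_extend_to_leaf (h : C.IsChain m v) (hac : C.graph.IsAcyclic) (hm : 0 < m) :
    ∃ M z, m ≤ M ∧ C.IsChain M z ∧ C.IsLeaf (z M) ∧ ∀ i ≤ m, z i = v i := by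
  induction hk : Fintype.card C.V - m generalizing m v with
  | zero => have := h.card_lt; omega
  | succ k ih =>
    by_cases hleaf : C.IsLeaf (v m)
    · exact ⟨m, v, le_rfl, h, hleaf, fun _ _ => rfl⟩
    obtain ⟨x, hadj, hne⟩ := Set.exists_ne_of_one_lt_ncard (not_le.1 hleaf) (v (m - 1))
    have hx (i : ℕ) (hi : i ≤ m) : v i ≠ x := by
      rintro rfl
      obtain rfl | hi := hi.eq_or_lt
      · exact C.graph.irrefl hadj
      · have := h.eq_succ_of_adj hac hi le_rfl (C.graph.adj_symm hadj)
        exact hne (by congr 1; omega)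
    obtain ⟨M, z, hM, hz, hzM, hzv⟩ := ih (h.snoc hx hadj) (by omega) (by omega)
    refine ⟨M, z, by omega, hz, hzM, fun i hi => ?_⟩
    rw [hzv i (by omega), Function.update_of_ne (by omega)]

theorem hasPattern (h : C.IsChain m v) {s n : ℕ} (hn : 0 < n) (hs : s + n ≤ m + 1) :
    C.HasPattern ((List.range' s n).map fun i => C.adjw (v i)) :=
  ⟨n - 1, _, h.shift (s := s) (by omega), by
    rw [List.length_map, List.length_range']; omega, fun i => by simp⟩

end IsChain

theorem HasPattern.reverse {p : List ℤ} (h : C.HasPattern p) : C.HasPattern p.reverse := by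
  obtain ⟨m, v, hv, hlen, hp⟩ := h
  refine ⟨m, _, hv.reverse, by simpa using hlen, fun i => ?_⟩
  have := hp ⟨m - i, by omega⟩
  simpa [← hlen] using this

end Config

theorem three_le_length_and_flag_of_mem_badPatterns : ∀ p ∈ badPatterns,
    3 ≤ p.length ∧ ∀ q ∈ p, q.1 = 0 → q.2 = true := by
  decide

namespace Config

variable {C : Config} {m : ℕ} {v : ℕ → C.V}

theorem IsBadPartChain.isBad_of_adjw_eq_zero {p : List (ℤ × Bool)} {n : ℕ} {b : ℕ → C.V}
    (hp : p ∈ badPatterns) (hb : C.IsBadPartChain p n b) {i : ℕ} (hi : i ≤ n)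
    (h0 : C.adjw (b i) = 0) : C.IsBad (b i) := by
  have hip : i < p.length := by have := hb.2.1; omega
  refine (hb.2.2.2 _).2 ⟨⟨i, hip⟩, ?_, rfl⟩
  exact (three_le_length_and_flag_of_mem_badPatterns p hp).2 _ (List.get_mem ..)
    ((hb.2.2.1 ⟨i, hip⟩).symm.trans h0)

theorem IsBadPartChain.two_le {p : List (ℤ × Bool)} {n : ℕ} {b : ℕ → C.V} (hp : p ∈ badPatterns)
    (hb : C.IsBadPartChain p n b) : 2 ≤ n := by
  have := (three_le_length_and_flag_of_mem_badPatterns p hp).1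
  have := hb.2.1
  omega

section ExtendedBadPart

variable {p : List (ℤ × Bool)} {n : ℕ} {b : ℕ → C.V}

theorem IsEBPCand.exists_index (h : C.IsEBPCand m v) (hlin : C.IsLinear)
    (h2m : 2 ≤ m) (h1 : C.adjw (v 1) = 0) (h2 : C.adjw (v 2) = 0) (hp : p ∈ badPatterns)
    (hb : C.IsBadPartChain p n b) {i : ℕ} (hi : i ≤ n) : ∃ j, 3 ≤ j ∧ j ≤ m ∧ v j = b i := by
  have hadj := h.1.2 1 (by omega)
  have hne1 (k : ℕ) (hk : k ≤ n) : b k ≠ v 1 := fun heq =>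
    not_isBad_of_adj_of_adjw_eq_zero hlin.1 hadj h2
      (heq ▸ hb.isBad_of_adjw_eq_zero hp hk (heq ▸ h1))
  have hne2 (k : ℕ) (hk : k ≤ n) : b k ≠ v 2 := fun heq =>
    not_isBad_of_adj_of_adjw_eq_zero hlin.1 hadj.symm h1
      (heq ▸ hb.isBad_of_adjw_eq_zero hp hk (heq ▸ h2))
  have hne0 : b i ≠ v 0 := fun heq => by
    obtain ⟨k, hk, hik⟩ : ∃ k ≤ n, C.graph.Adj (b i) (b k) := by
      have hn := hb.two_le hp
      obtain rfl | hi := hi.eq_or_lt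
      · exact ⟨i - 1, by omega, (hb.1.adj (by omega) le_rfl).symm⟩
      · exact ⟨i + 1, by omega, hb.1.2 i hi⟩
    obtain ⟨j, hj, hjk⟩ := h.2.1 p hp n b hb k hk
    rw [heq, ← hjk] at hik
    obtain rfl | hj0 := j.eq_zero_or_pos
    · exact C.graph.irrefl hik
    · exact hne1 k hk (by rw [← hjk, h.1.eq_succ_of_adj hlin.2 hj0 hj hik])
  obtain ⟨j, hj, hji⟩ := h.2.1 p hp n b hb i hi
  refine ⟨j, ?_, hj, hji⟩
  by_contra! hj3
  obtain rfl | rfl | rfl : j = 0 ∨ j = 1 ∨ j = 2 := by omega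
  exacts [hne0 hji.symm, hne1 i hi hji.symm, hne2 i hi hji.symm]

theorem IsEBPCand.five_le (h : C.IsEBPCand m v) (hlin : C.IsLinear)
    (h2m : 2 ≤ m) (h1 : C.adjw (v 1) = 0) (h2 : C.adjw (v 2) = 0) (hp : p ∈ badPatterns)
    (hb : C.IsBadPartChain p n b) : 5 ≤ m := by
  have hn := hb.two_le hp
  have hindex (i : ℕ) (hi : i ≤ n) := h.exists_index hlin h2m h1 h2 hp hb hi
  obtain ⟨j₀, hj₀, hj₀m, hb₀⟩ := hindex 0 (by omega)
  obtain ⟨j₁, hj₁, hj₁m, hb₁⟩ := hindex 1 (by omega)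
  obtain ⟨j₂, hj₂, hj₂m, hb₂⟩ := hindex 2 (by omega)
  have h01 : j₀ ≠ j₁ := by
    rintro rfl
    exact hb.1.ne (by omega) (by omega) zero_ne_one (hb₀.symm.trans hb₁)
  have h02 : j₀ ≠ j₂ := by
    rintro rfl
    exact hb.1.ne (by omega) (by omega) (by omega) (hb₀.symm.trans hb₂)
  have h12 : j₁ ≠ j₂ := by
    rintro rfl
    exact hb.1.ne (by omega) (by omega) (by omega) (hb₁.symm.trans hb₂)
  omega

-- If `v₃` had adjusted weight zero, then `v₁, …, v_m` would be a shorter candidate.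
theorem IsExtBadPart.adjw_three_ne_zero (h : C.IsExtBadPart m v) (hlin : C.IsLinear)
    (h2m : 2 ≤ m) (h1 : C.adjw (v 1) = 0) (h2 : C.adjw (v 2) = 0)
    (hp : p ∈ badPatterns) (hb : C.IsBadPartChain p n b) : C.adjw (v 3) ≠ 0 := fun h3 => by
  have hm := h.1.five_le hlin h2m h1 h2 hp hb
  have hcand : C.IsEBPCand (m - 1) fun k => v (1 + k) := by
    refine ⟨h.1.1.shift (by omega), fun q hq k c hc i hi => ?_,
      .inr ⟨by omega, h2, h3⟩, ?_⟩
    · obtain ⟨j, hj3, hjm, hji⟩ := h.1.exists_index hlin h2m h1 h2 hq hc hi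
      exact ⟨j - 1, by omega, (congrArg v (by omega)).trans hji⟩
    · have e0 : 1 + (m - 1) = m := by omega
      have e1 : 1 + (m - 1 - 1) = m - 1 := by omega
      have e2 : 1 + (m - 1 - 2) = m - 2 := by omega
      simp only [e0, e1, e2]
      exact h.1.2.2.2.imp_right fun hback => ⟨by omega, hback.2⟩
  have := h.2 _ _ hcand
  omega

end ExtendedBadPart

/-- The end of the extended bad part at `v₀`, read backwards from `v₅` and continued to a leaf of
the configuration: `z₀, …, z₅` are `v₅, …, v₀`, and `z₆, …, z_M` lie outside. -/
structure IsFrontArm (C : Config) (M : ℕ) (z : ℕ → C.V) : Prop where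
  isLinear : C.IsLinear
  workingConditions : C.WorkingConditions
  isChain : C.IsChain M z
  six_le : 6 ≤ M
  isLeaf : C.IsLeaf (z M)
  adjw_two_pos : 0 < C.adjw (z 2)
  adjw_three : C.adjw (z 3) = 0
  adjw_four : C.adjw (z 4) = 0
  not_isBad : ∀ i, 3 ≤ i → i ≤ M → ¬ C.IsBad (z i)

theorem IsExtBadPart.exists_isFrontArm (h : C.IsExtBadPart m v) (hlin : C.IsLinear)
    (hwc : C.WorkingConditions) (hbad : ∃ x, C.IsBad x) (hleaf : ¬ C.IsLeaf (v 0)) :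
    ∃ M z, C.IsFrontArm M z ∧ z 2 = v 3 ∧ z 3 = v 2 ∧ z 4 = v 1 := by
  obtain ⟨p, hp, n, b, hb⟩ := hwc.2.2.2.2.2.2.2 hbad
  obtain ⟨h2m, h1, h2⟩ := h.1.2.2.1.resolve_left hleaf
  have h5m := h.1.five_le hlin h2m h1 h2 hp hb
  obtain ⟨M, z, hmM, hz, hzM, hzv⟩ := h.1.1.reverse.exists_extend_to_leaf hlin.2 (by omega)
  have hzv' (i : ℕ) (hi : i ≤ 5) : z (m - 5 + i) = v (5 - i) := by
    rw [hzv _ (by omega)]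
    congr 1
    omega
  have hM : m ≠ M := by
    rintro rfl
    rw [hzv m le_rfl, Nat.sub_self] at hzM
    exact hleaf hzM
  refine ⟨M - (m - 5), fun i => z (m - 5 + i), ?_, hzv' 2 (by omega), hzv' 3 (by omega),
    hzv' 4 (by omega)⟩
  refine ⟨hlin, hwc, hz.shift (by omega), by omega, ?_, ?_, ?_, ?_, fun i hi hiM hbad_i => ?_⟩
  · rwa [Nat.add_sub_of_le (by omega)]
  · rw [hzv' 2 (by omega)]
    exact (adjw_nonneg hlin.1 hwc.1 _).lt_of_ne'
      (h.adjw_three_ne_zero hlin h2m h1 h2 hp hb)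
  · rwa [hzv' 3 (by omega)]
  · rwa [hzv' 4 (by omega)]
  · obtain ⟨k, -, hk⟩ := (hb.2.2.2 _).1 hbad_i
    obtain ⟨j, hj3, hjm, hj⟩ := h.1.exists_index hlin h2m h1 h2 hp hb
      (show (k : ℕ) ≤ n by have := hb.2.1; omega)
    have hzj : z (m - j) = v j := by
      rw [hzv _ (by omega)]
      congr 1
      omega
    have := hz.1 _ (by omega) _ (by omega) (hzj.trans (hj.trans hk))
    omega

end Config

namespace Config.IsFrontArm

variable {C : Config} {M : ℕ} {z : ℕ → C.V}

theorem adjw_nonneg (h : C.IsFrontArm M z) (x : C.V) : 0 ≤ C.adjw x :=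
  Config.adjw_nonneg h.isLinear.1 h.workingConditions.1 x

theorem adjw_le_three (h : C.IsFrontArm M z) (x : C.V) : C.adjw x ≤ 3 := h.workingConditions.2.1 x

theorem w_le (h : C.IsFrontArm M z) (x : C.V) : C.w x ≤ C.adjw x + 2 := by
  have := h.isLinear.1 x
  unfold adjw
  omega

theorem w_eq (h : C.IsFrontArm M z) {i : ℕ} (hi : 0 < i) (hiM : i < M) : C.w (z i) = C.adjw
    (z i) + 2 := by
  obtain ⟨i, rfl⟩ := Nat.exists_eq_add_one.2 hi
  have := h.isChain.deg_eq_two h.isLinear.1 (i := i) (by omega)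
  unfold adjw
  omega

theorem w_last (h : C.IsFrontArm M z) : C.w (z M) = C.adjw (z M) + 1 := by
  have hM := h.six_le
  have hdeg : C.deg (z M) = 1 :=
    le_antisymm h.isLeaf (one_le_deg (h.isChain.adj (i := M - 1) (by omega) le_rfl).symm)
  unfold adjw
  omega

theorem lt_of_adjw_eq_zero (h : C.IsFrontArm M z) {i : ℕ} (hi : i ≤ M) (h0 : C.adjw (z i) = 0) :
    i < M := by
  refine hi.lt_of_ne ?_
  rintro rfl
  have := h.w_last
  have := h.workingConditions.1 (z i)
  omega

theorem adjw_le_one (h : C.IsFrontArm M z) {x y : C.V} (hx : 1 < C.adjw x) (hxy : x ≠ y) :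
    C.adjw y ≤ 1 := by
  by_contra! hy
  exact hxy (h.workingConditions.2.2.1 x y hx hy)

theorem adjw_ne_one_of_adj (h : C.IsFrontArm M z) {x y y' : C.V} (hx : C.adjw x = 3)
    (hadj : C.graph.Adj y y')
    (hy : C.adjw y = 1) : C.adjw y' ≠ 1 :=
  h.workingConditions.2.2.2.2.1 ⟨x, hx⟩ y y' hadj hy

theorem adjw_add_two_eq_zero (h : C.IsFrontArm M z) {i : ℕ} (hi : 2 ≤ i) (hiM : i + 2 ≤ M)
    (hpos : 0 < C.adjw (z i)) :
    C.adjw (z (i + 2)) = 0 := by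
  by_contra hne
  exact h.not_isBad (i + 1) (by omega) (by omega)
    ⟨z i, z (i + 2), h.isChain.ne (by omega) hiM (by omega), (h.isChain.2 i (by omega)).symm,
      h.isChain.2 (i + 1) (by omega), hpos, (h.adjw_nonneg _).lt_of_ne' hne⟩

theorem map_adjw_ne_of_mem_forbiddenPatterns (h : C.IsFrontArm M z) {p : List ℤ}
    (hp : p ∈ forbiddenPatterns) {s n : ℕ} (hn : 0 < n)
    (hs : s + n ≤ M + 1) : (List.range' s n).map (fun i => C.adjw (z i)) ≠ p ∧
      (List.range' s n).map (fun i => C.adjw (z i)) ≠ p.reverse := by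
  have hpat := h.isChain.hasPattern hn hs
  refine ⟨fun heq => h.workingConditions.2.2.2.2.2.2.1 p hp (heq ▸ hpat), fun heq => ?_⟩
  exact h.workingConditions.2.2.2.2.2.2.1 p hp (by simpa [heq] using hpat.reverse)

theorem adjw_five_eq_zero_or_eq_one (h : C.IsFrontArm M z) : C.adjw (z 5) = 0 ∨ C.adjw
    (z 5) = 1 ∧ C.adjw (z 2) = 1 := by
  have hM := h.six_le
  have h1002 : ¬ (C.adjw (z 2) = 1 ∧ C.adjw (z 5) = 2) ∧
      ¬ (C.adjw (z 2) = 2 ∧ C.adjw (z 5) = 1) := by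
    simpa [List.range', h.adjw_three, h.adjw_four] using
      h.map_adjw_ne_of_mem_forbiddenPatterns (p := [1, 0, 0, 2]) (s := 2) (n := 4)
        (by decide) (by omega) (by omega)
  have h1003 : ¬ (C.adjw (z 2) = 1 ∧ C.adjw (z 5) = 3) ∧
      ¬ (C.adjw (z 2) = 3 ∧ C.adjw (z 5) = 1) := by
    simpa [List.range', h.adjw_three, h.adjw_four] using
      h.map_adjw_ne_of_mem_forbiddenPatterns (p := [1, 0, 0, 3]) (s := 2) (n := 4)
        (by decide) (by omega) (by omega)
  have hle (hx : 1 < C.adjw (z 2)) :=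
    h.adjw_le_one hx (h.isChain.ne (j := 5) (by omega) (by omega) (by omega))
  have := h.adjw_nonneg (z 5)
  have := h.adjw_le_three (z 5)
  have := h.adjw_le_three (z 2)
  have := h.adjw_two_pos
  omega

theorem adjw_six_add_adjw_one_le (h : C.IsFrontArm M z) (h5 : C.adjw (z 5) = 1) :
    C.adjw (z 6) + C.adjw (z 1) ≤ 2 := by
  have hM := h.six_le
  have h2 : C.adjw (z 2) = 1 := by have := h.adjw_five_eq_zero_or_eq_one; omega
  have h110012 : ¬ (C.adjw (z 1) = 1 ∧ C.adjw (z 6) = 2) ∧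
      ¬ (C.adjw (z 1) = 2 ∧ C.adjw (z 6) = 1) := by
    simpa [List.range', h.adjw_three, h.adjw_four, h2, h5] using
      h.map_adjw_ne_of_mem_forbiddenPatterns (p := [1, 1, 0, 0, 1, 2]) (s := 1) (n := 6)
        (by decide) (by omega) (by omega)
  have h31001 : C.adjw (z 1) ≠ 3 := by
    simpa [List.range', h.adjw_three, h.adjw_four, h2, h5] using
      h.map_adjw_ne_of_mem_forbiddenPatterns (p := [3, 1, 0, 0, 1]) (s := 1) (n := 5)
        (by decide) (by omega) (by omega)
  have h10013 : C.adjw (z 6) ≠ 3 := by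
    simpa [List.range', h.adjw_three, h.adjw_four, h2, h5] using
      h.map_adjw_ne_of_mem_forbiddenPatterns (p := [3, 1, 0, 0, 1]) (s := 2) (n := 5)
        (by decide) (by omega) (by omega)
  have hle (hx : 1 < C.adjw (z 1)) :=
    h.adjw_le_one hx (h.isChain.ne (j := 6) (by omega) (by omega) (by omega))
  have := h.adjw_le_three (z 6)
  have := h.adjw_le_three (z 1)
  omega

theorem adjw_six_eq_zero (h : C.IsFrontArm M z) (h5 : C.adjw (z 5) = 0) (h2 : C.adjw (z 2) = 3) :
    C.adjw (z 6) = 0 := by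
  have hM := h.six_le
  have h30001 : C.adjw (z 6) ≠ 1 := by
    simpa [List.range', h.adjw_three, h.adjw_four, h2, h5] using
      h.map_adjw_ne_of_mem_forbiddenPatterns (p := [1, 0, 0, 0, 3]) (s := 2) (n := 5)
        (by decide) (by omega) (by omega)
  have hle := h.adjw_le_one (x := z 2) (by omega)
    (h.isChain.ne (j := 6) (by omega) (by omega) (by omega))
  have := h.adjw_nonneg (z 6)
  omega

end Config.IsFrontArm

/-- The weights `w a, …, w M`. -/
def tailWeights (w : ℕ → ℤ) (M a : ℕ) : List ℤ := (List.range' a (M + 1 - a)).map w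

theorem tailWeights_eq_cons (w : ℕ → ℤ) {M a : ℕ} (ha : a ≤ M) :
    tailWeights w M a = w a :: tailWeights w M (a + 1) := by
  rw [tailWeights, Nat.sub_add_comm ha, List.range'_succ, List.map_cons, tailWeights,
    Nat.add_sub_add_right]

theorem LinearSemidef.blowDown_tail {w : ℕ → ℤ} {M a : ℕ} {n q : ℤ} {r : List ℤ}
    (h : LinearSemidef (n :: tailWeights w M a) (q :: r)) (hn : n ≤ 1) (ha : a ≤ M) {b : ℕ}
    (hb : b = a + 1) : LinearSemidef ((w a - 1) :: tailWeights w M b) ((q - 1) :: r) := by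
  rw [tailWeights_eq_cons w ha] at h
  rw [hb]
  exact h.blowDown_left hn

/-- Coordinates of the vectors of a front arm (`z₃` and `z₄` excepted) along the frame adapted to
`z₄, z₃`, when no vertex off `z₁, …, z₅` meets the frame: orthogonality to `z₃` and `z₄` leaves one
free parameter for each of `z₂`, `z₅` and `z₁`. -/
def screwCoord (α β c : ℤ) : ℕ → Fin 3 → ℤ
  | 1 => ![c, c, c]
  | 2 => ![α, α, α + 1]
  | 5 => ![β - 1, β, β]
  | _ => 0

/-- The vectors `x i`, for `i ≤ M` other than `3` and `4`, have the Gram matrix that is left of a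
chain with weights `w` after the coordinates `screwCoord α β c` have been split off. -/
structure IsScrewSystem {N : ℕ} (w : ℕ → ℤ) (M : ℕ) (α β c : ℤ) (x : ℕ → Fin N → ℤ) : Prop where
  six_le : 6 ≤ M
  dot_self : ∀ i ≤ M, i ≠ 3 → i ≠ 4 →
    dot (x i) (x i) = w i - ∑ k, screwCoord α β c i k * screwCoord α β c i k
  dot_lt : ∀ i j, i < j → j ≤ M → i ≠ 3 → i ≠ 4 → j ≠ 3 → j ≠ 4 →
    dot (x i) (x j) =
      (if j = i + 1 then -1 else 0) - ∑ k, screwCoord α β c i k * screwCoord α β c j k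

namespace IsScrewSystem

variable {N M : ℕ} {w : ℕ → ℤ} {α β c : ℤ} {x : ℕ → Fin N → ℤ}

theorem dot_self_far (h : IsScrewSystem w M α β c x) {i : ℕ} (hi : 6 ≤ i) (hiM : i ≤ M) : dot (x i)
    (x i) = w i := by
  obtain ⟨i, rfl⟩ := Nat.exists_eq_add_of_le' hi
  simp [h.dot_self _ hiM, screwCoord]

theorem dot_far (h : IsScrewSystem w M α β c x) {i j : ℕ} (hij : i < j) (hi : i ≠ 3) (hi' : i ≠ 4)
    (hj : 6 ≤ j) (hjM : j ≤ M) :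
    dot (x i) (x j) = if j = i + 1 then -1 else 0 := by
  obtain ⟨j, rfl⟩ := Nat.exists_eq_add_of_le' hj
  simp [h.dot_lt i _ hij hjM hi hi', screwCoord]

theorem dot_self_zero (h : IsScrewSystem w M α β c x) : dot (x 0) (x 0) = w 0 := by
  simp [h.dot_self 0 (Nat.zero_le M), screwCoord]

theorem dot_self_one (h : IsScrewSystem w M α β c x) : dot (x 1) (x 1) = w 1 - 3 * c ^ 2 := by
  have hM := h.six_le
  rw [h.dot_self 1 (by omega) (by omega) (by omega), Fin.sum_univ_three]
  change w 1 - (c * c + c * c + c * c) = _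
  ring

theorem dot_self_two (h : IsScrewSystem w M α β c x) : dot (x 2) (x 2) = w 2 -
    (3 * α ^ 2 + 2 * α + 1) := by
  have hM := h.six_le
  rw [h.dot_self 2 (by omega) (by omega) (by omega), Fin.sum_univ_three]
  change w 2 - (α * α + α * α + (α + 1) * (α + 1)) = _
  ring

theorem dot_self_five (h : IsScrewSystem w M α β c x) : dot (x 5) (x 5) = w 5 -
    (3 * β ^ 2 - 2 * β + 1) := by
  have hM := h.six_le
  rw [h.dot_self 5 (by omega) (by omega) (by omega), Fin.sum_univ_three]
  change w 5 - ((β - 1) * (β - 1) + β * β + β * β) = _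
  ring

theorem dot_zero (h : IsScrewSystem w M α β c x) {j : ℕ} (hj : 0 < j) (hjM : j ≤ M) (hj3 : j ≠ 3)
    (hj4 : j ≠ 4) :
    dot (x 0) (x j) = if j = 1 then -1 else 0 := by
  simp [h.dot_lt 0 j hj hjM, hj3, hj4, screwCoord]

theorem dot_zero_one (h : IsScrewSystem w M α β c x) : dot (x 0) (x 1) = -1 := by
  have hM := h.six_le
  rw [h.dot_zero (by omega) (by omega) (by omega) (by omega), if_pos rfl]

theorem dot_zero_two (h : IsScrewSystem w M α β c x) : dot (x 0) (x 2) = 0 := by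
  have hM := h.six_le
  rw [h.dot_zero (by omega) (by omega) (by omega) (by omega), if_neg (by omega)]

theorem dot_zero_five (h : IsScrewSystem w M α β c x) : dot (x 0) (x 5) = 0 := by
  have hM := h.six_le
  rw [h.dot_zero (by omega) (by omega) (by omega) (by omega), if_neg (by omega)]

theorem dot_six_two (h : IsScrewSystem w M α β c x) : dot (x 6) (x 2) = 0 := by
  rw [dot_comm, h.dot_far (by omega) (by omega) (by omega) le_rfl h.six_le, if_neg (by omega)]

theorem dot_six_five (h : IsScrewSystem w M α β c x) : dot (x 6) (x 5) = -1 := by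
  rw [dot_comm, h.dot_far (by omega) (by omega) (by omega) le_rfl h.six_le, if_pos rfl]

theorem dot_one_two (h : IsScrewSystem w M α β c x) : dot (x 1) (x 2) = -1 - c * (3 * α + 1) := by
  have hM := h.six_le
  rw [h.dot_lt 1 2 (by omega) (by omega) (by omega) (by omega) (by omega) (by omega),
    Fin.sum_univ_three]
  change -1 - (c * α + c * α + c * (α + 1)) = _
  ring

theorem dot_one_five (h : IsScrewSystem w M α β c x) : dot (x 1) (x 5) = -(c * (3 * β - 1)) := by
  have hM := h.six_le
  rw [h.dot_lt 1 5 (by omega) (by omega) (by omega) (by omega) (by omega) (by omega),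
    Fin.sum_univ_three]
  change 0 - (c * (β - 1) + c * β + c * β) = _
  ring

theorem dot_two_five (h : IsScrewSystem w M α β c x) : dot (x 2) (x 5) = -(3 * α * β - α + β) := by
  have hM := h.six_le
  rw [h.dot_lt 2 5 (by omega) (by omega) (by omega) (by omega) (by omega) (by omega),
    Fin.sum_univ_three]
  change 0 - (α * (β - 1) + α * β + (α + 1) * β) = _
  ring

theorem linearSemidef (h : IsScrewSystem w M α β c x) {r : List (Fin N → ℤ)} {y : Fin N → ℤ}
    (hr : IsVectorChain (y :: r))
    (h5 : MeetsOnlyHead (x 5) (-1) (y :: r))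
    (hfar : ∀ i, 6 ≤ i → i ≤ M → ∀ u ∈ y :: r, dot u (x i) = 0) :
    LinearSemidef (dot (x 5) (x 5) :: tailWeights w M 6)
      ((y :: r).map fun u => dot u u) := by
  have hM := h.six_le
  have harm : IsVectorChain ((List.range' 5 (M + 1 - 6 + 1)).map x) :=
    isVectorChain_map_range'
      (fun i hi hiM => by
        rw [h.dot_far (by omega) (by omega) (by omega) (by omega) (by omega), if_pos rfl])
      fun i j hi hij hj => by
        rw [h.dot_far (by omega) (by omega) (by omega) (by omega) (by omega), if_neg (by omega)]
  have hmem {u : Fin N → ℤ} (hu : u ∈ (List.range' 6 (M + 1 - 6)).map x) :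
      ∃ i, 6 ≤ i ∧ i ≤ M ∧ x i = u := by
    obtain ⟨i, hi, rfl⟩ := List.mem_map.1 hu
    rw [List.mem_range'_1] at hi
    exact ⟨i, hi.1, by omega, rfl⟩
  have hsemi := LinearSemidef.of_isVectorChain harm hr h5 fun u hu y' hy' => by
    obtain ⟨i, hi, hiM, rfl⟩ := hmem hu
    rw [dot_comm, hfar i hi hiM y' hy']
  have hnorms : ((List.range' 6 (M + 1 - 6)).map x).map (fun u => dot u u) =
      tailWeights w M 6 := by
    rw [List.map_map]
    refine List.map_congr_left fun i hi => ?_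
    rw [List.mem_range'_1] at hi
    exact h.dot_self_far hi.1 (by omega)
  rwa [List.map_cons, hnorms] at hsemi

theorem linearSemidef_five_two (h : IsScrewSystem w M α β c x) (hc : c = 0)
    (hαβ : 3 * α * β - α + β = 1) :
    LinearSemidef ((w 5 - (3 * β ^ 2 - 2 * β + 1)) :: tailWeights w M 6)
      [w 2 - (3 * α ^ 2 + 2 * α + 1), w 1, w 0] := by
  subst hc
  have h21 : dot (x 2) (x 1) = -1 := by rw [dot_comm, h.dot_one_two]; ring
  have h51 : dot (x 5) (x 1) = 0 := by rw [dot_comm, h.dot_one_five]; ring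
  have h52 : dot (x 5) (x 2) = -1 := by rw [dot_comm, h.dot_two_five, hαβ]
  have h10 : dot (x 1) (x 0) = -1 := by rw [dot_comm, h.dot_zero_one]
  have h20 : dot (x 2) (x 0) = 0 := by rw [dot_comm, h.dot_zero_two]
  have h50 : dot (x 5) (x 0) = 0 := by rw [dot_comm, h.dot_zero_five]
  have hchain : IsVectorChain [x 2, x 1, x 0] := by
    simp [IsVectorChain, MeetsOnlyHead, h21, h20, h10]
  have hmeets : MeetsOnlyHead (x 5) (-1) [x 2, x 1, x 0] := by
    simp [MeetsOnlyHead, h52, h51, h50]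
  have hsemi := h.linearSemidef hchain hmeets fun i hi hiM u hu => by
    obtain rfl | rfl | rfl : u = x 2 ∨ u = x 1 ∨ u = x 0 := by simpa using hu
    all_goals rw [h.dot_far (by omega) (by omega) (by omega) hi hiM, if_neg (by omega)]
  simpa [h.dot_self_five, h.dot_self_two, h.dot_self_one, h.dot_self_zero] using hsemi

theorem linearSemidef_five_one (h : IsScrewSystem w M α β c x) (hα : α = 0) (hβ : β = 0)
    (hc : c = -1) :
    LinearSemidef ((w 5 - 1) :: tailWeights w M 6) [w 1 - 3, w 0] := by
  subst hα hβ hc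
  have h51 : dot (x 5) (x 1) = -1 := by rw [dot_comm, h.dot_one_five]; ring
  have h10 : dot (x 1) (x 0) = -1 := by rw [dot_comm, h.dot_zero_one]
  have h50 : dot (x 5) (x 0) = 0 := by rw [dot_comm, h.dot_zero_five]
  have hchain : IsVectorChain [x 1, x 0] := by simp [IsVectorChain, MeetsOnlyHead, h10]
  have hmeets : MeetsOnlyHead (x 5) (-1) [x 1, x 0] := by simp [MeetsOnlyHead, h51, h50]
  have hsemi := h.linearSemidef hchain hmeets fun i hi hiM u hu => by
    obtain rfl | rfl : u = x 1 ∨ u = x 0 := by simpa using hu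
    all_goals rw [h.dot_far (by omega) (by omega) (by omega) hi hiM, if_neg (by omega)]
  simpa [h.dot_self_five, h.dot_self_one, h.dot_self_zero] using hsemi

end IsScrewSystem

namespace Config.IsFrontArm

variable {C : Config} {M : ℕ} {z : ℕ → C.V}

theorem adjw_index_le_one (h : C.IsFrontArm M z) {i j : ℕ} (hi : i ≤ M) (hj : j ≤ M) (hij : i ≠ j)
    (hpos : 1 < C.adjw (z i)) : C.adjw (z j) ≤ 1 :=
  h.adjw_le_one hpos (h.isChain.ne hi hj hij)

theorem lt_and_adjw_eq_one_of_three_le_w (h : C.IsFrontArm M z) {i : ℕ} (hi : 0 < i) (hiM : i ≤ M)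
    (hle : C.adjw (z i) ≤ 1)
    (hw : 3 ≤ C.w (z i)) : i < M ∧ C.adjw (z i) = 1 := by
  obtain rfl | hlt := hiM.eq_or_lt
  · have := h.w_last
    omega
  · have := h.w_eq hi hlt
    omega

theorem blowDown_of_adjw_eq_zero (h : C.IsFrontArm M z) {i : ℕ} {n q : ℤ} {r : List ℤ}
    (hs : LinearSemidef (n :: tailWeights (fun i => C.w (z i)) M i) (q :: r)) (hn : n ≤ 1)
    (hi : 0 < i) (hiM : i ≤ M) (h0 : C.adjw (z i) = 0) {j : ℕ} (hj : j = i + 1) :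
    i < M ∧ LinearSemidef (1 :: tailWeights (fun i => C.w (z i)) M j) ((q - 1) :: r) := by
  have hlt := h.lt_of_adjw_eq_zero hiM h0
  have hw : C.w (z i) - 1 = 1 := by have := h.w_eq hi hlt; omega
  have hs' := hs.blowDown_tail hn hiM hj
  simp only [hw] at hs'
  exact ⟨hlt, hs'⟩

theorem not_linearSemidef_w_one_sub_three (h : C.IsFrontArm M z) : ¬ LinearSemidef
    ((C.w (z 5) - 1) :: tailWeights (fun i => C.w (z i)) M 6) [C.w (z 1) - 3, C.w (z 0)] := by
  intro hs
  have hM := h.six_le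
  have hw1 := h.w_eq (i := 1) (by omega) (by omega)
  have hw5 := h.w_eq (i := 5) (by omega) (by omega)
  have h1 : 2 ≤ C.adjw (z 1) := by have := hs.pos_right; omega
  have hle {j : ℕ} (hj : j ≤ M) (hj1 : 1 ≠ j) := h.adjw_index_le_one (by omega) hj hj1 (by omega)
  have hw0 : C.w (z 0) ≤ 3 := by
    have := h.w_le (z 0)
    have := hle (Nat.zero_le M) (by omega)
    omega
  obtain h5 | ⟨h5, -⟩ := h.adjw_five_eq_zero_or_eq_one
  · have s₁ := hs.blowDown_tail (b := 7) (by omega) hM rfl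
    have h1' : C.adjw (z 1) = 3 := by have := s₁.pos_right; have := h.adjw_le_three (z 1); omega
    have s₂ := s₁.blowDown_right (by omega)
    obtain ⟨hM6, h6⟩ := h.lt_and_adjw_eq_one_of_three_le_w (by omega) hM (hle hM (by omega))
      (by have := s₂.pos_left; omega)
    have h7 : C.adjw (z 7) = 0 := by
      have := h.adjw_ne_one_of_adj (y' := z 7) h1' (h.isChain.2 6 hM6) h6
      have := hle (j := 7) hM6 (by omega)
      have := h.adjw_nonneg (z 7)
      omega
    have hw6 := h.w_eq (by omega) hM6
    obtain ⟨hM7, s₃⟩ := h.blowDown_of_adjw_eq_zero (j := 8) s₂ (by omega) (by omega) hM6 h7 rfl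
    have := (s₃.blowDown_tail (b := 9) le_rfl hM7 rfl).pos_right
    omega
  · have hsum := h.adjw_six_add_adjw_one_le h5
    have h6 : C.adjw (z 6) = 0 := by have := h.adjw_nonneg (z 6); omega
    obtain ⟨hM6, s₂⟩ := h.blowDown_of_adjw_eq_zero (j := 7) (hs.blowDown_right (by omega))
      (by omega) (by omega) hM h6 rfl
    have := (s₂.blowDown_tail (b := 8) le_rfl hM6 rfl).pos_right
    omega

theorem not_linearSemidef_w_five_sub_two (h : C.IsFrontArm M z) : ¬ LinearSemidef
    ((C.w (z 5) - 2) :: tailWeights (fun i => C.w (z i)) M 6)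
    [C.w (z 2) - 1, C.w (z 1), C.w (z 0)] := by
  intro hs
  have hM := h.six_le
  have hw1 := h.w_eq (i := 1) (by omega) (by omega)
  have hw2 := h.w_eq (i := 2) (by omega) (by omega)
  have hw5 := h.w_eq (i := 5) (by omega) (by omega)
  obtain ⟨h5, h2⟩ := h.adjw_five_eq_zero_or_eq_one.resolve_left (by have := hs.pos_left; omega)
  have hsum := h.adjw_six_add_adjw_one_le h5
  have h1 := h.adjw_nonneg (z 1)
  have s₂ := (hs.blowDown_tail (b := 7) (by omega) hM rfl).blowDown_right (by omega)
  have hw6 : 3 ≤ C.w (z 6) := by have := s₂.pos_left; omega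
  by_cases h6 : C.adjw (z 6) ≤ 1
  · obtain ⟨hM6, h6⟩ := h.lt_and_adjw_eq_one_of_three_le_w (by omega) hM h6 hw6
    have h7 : C.adjw (z 7) = 0 := h.adjw_add_two_eq_zero (i := 5) (by omega) hM6 (by omega)
    have hw6 := h.w_eq (by omega) hM6
    obtain ⟨hM7, s₃⟩ := h.blowDown_of_adjw_eq_zero (j := 8) s₂ (by omega) (by omega) hM6 h7 rfl
    have := (s₃.blowDown_tail (b := 9) le_rfl hM7 rfl).pos_right
    omega
  · have hw0 : C.w (z 0) ≤ 3 := by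
      have := h.w_le (z 0)
      have := h.adjw_index_le_one hM (Nat.zero_le M) (by omega) (by omega)
      omega
    have s₃ := s₂.blowDown_right (by omega)
    have hM6 : 6 < M := by
      refine hM.lt_of_ne ?_
      rintro rfl
      have := h.w_last
      have := s₃.pos_left
      omega
    have h7 : C.adjw (z 7) = 0 := h.adjw_add_two_eq_zero (i := 5) (by omega) hM6 (by omega)
    have hw6 := h.w_eq (by omega) hM6
    obtain ⟨hM7, s₄⟩ := h.blowDown_of_adjw_eq_zero (j := 8) s₃ (by omega) (by omega) hM6 h7 rfl
    have := (s₄.blowDown_tail (b := 9) le_rfl hM7 rfl).pos_right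
    omega

theorem not_linearSemidef_w_two_sub_two_of_adjw_eq_one (h : C.IsFrontArm M z)
    (h2 : C.adjw (z 2) = 1) : ¬ LinearSemidef
    ((C.w (z 5) - 1) :: tailWeights (fun i => C.w (z i)) M 6)
    [C.w (z 2) - 2, C.w (z 1), C.w (z 0)] := by
  intro hs
  have hM := h.six_le
  have hw1 := h.w_eq (i := 1) (by omega) (by omega)
  have hw2 := h.w_eq (i := 2) (by omega) (by omega)
  have hw5 := h.w_eq (i := 5) (by omega) (by omega)
  have s₁ := hs.blowDown_right (by omega)
  have h5 : C.adjw (z 5) = 1 := by have := s₁.pos_left; have := h.adjw_five_eq_zero_or_eq_one; omega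
  have hsum := h.adjw_six_add_adjw_one_le h5
  have h7 (hM6 : 6 < M) : C.adjw (z 7) = 0 :=
    h.adjw_add_two_eq_zero (i := 5) (by omega) hM6 (by omega)
  have s₂ := s₁.blowDown_tail (b := 7) (by omega) hM rfl
  have h1 : 1 ≤ C.adjw (z 1) := by have := s₂.pos_right; omega
  by_cases h1' : C.adjw (z 1) = 1
  · have s₃ := s₂.blowDown_right (by omega)
    obtain ⟨hM6, h6⟩ := h.lt_and_adjw_eq_one_of_three_le_w (by omega) hM (by omega)
      (by have := s₃.pos_left; omega)
    have hw6 := h.w_eq (by omega) hM6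
    obtain ⟨hM7, s₄⟩ :=
      h.blowDown_of_adjw_eq_zero (j := 8) s₃ (by omega) (by omega) hM6 (h7 hM6) rfl
    have h8 : C.adjw (z 8) = 0 := h.adjw_add_two_eq_zero (i := 6) (by omega) hM7 (by omega)
    obtain ⟨hM8, s₅⟩ := h.blowDown_of_adjw_eq_zero (j := 9) s₄ le_rfl (by omega) hM7 h8 rfl
    have hw0 : C.w (z 0) ≤ 4 := by
      have := h.w_le (z 0)
      have := h.adjw_le_three (z 0)
      have h0 : C.adjw (z 0) ≠ 3 := fun h3 =>
        h.adjw_ne_one_of_adj h3 (h.isChain.2 1 (by omega)) h1' h2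
      omega
    have := (s₅.blowDown_tail (b := 10) le_rfl hM8 rfl).pos_right
    omega
  · have h6 : C.adjw (z 6) = 0 := by have := h.adjw_nonneg (z 6); omega
    have hM6 := h.lt_of_adjw_eq_zero hM h6
    have hw6 := h.w_eq (by omega) hM6
    obtain ⟨hM7, s₃⟩ :=
      h.blowDown_of_adjw_eq_zero (j := 8) s₂ (by omega) (by omega) hM6 (h7 hM6) rfl
    have := (s₃.blowDown_tail (b := 9) le_rfl hM7 rfl).pos_right
    omega

theorem not_linearSemidef_w_two_sub_two_of_adjw_eq_two (h : C.IsFrontArm M z)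
    (h2 : C.adjw (z 2) = 2) : ¬ LinearSemidef
    ((C.w (z 5) - 1) :: tailWeights (fun i => C.w (z i)) M 6)
    [C.w (z 2) - 2, C.w (z 1), C.w (z 0)] := by
  intro hs
  have hM := h.six_le
  have hw1 := h.w_eq (i := 1) (by omega) (by omega)
  have hw2 := h.w_eq (i := 2) (by omega) (by omega)
  have hw5 := h.w_eq (i := 5) (by omega) (by omega)
  have h5 : C.adjw (z 5) = 0 := by have := h.adjw_five_eq_zero_or_eq_one; omega
  have hle {j : ℕ} (hj : j ≤ M) (hj2 : 2 ≠ j) := h.adjw_index_le_one (by omega) hj hj2 (by omega)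
  have hw0 := h.w_le (z 0)
  have h0 := hle (Nat.zero_le M) (by omega)
  have h1 := hle (j := 1) (by omega) (by omega)
  have s₂ := (hs.blowDown_tail (b := 7) (by omega) hM rfl).blowDown_right (by omega)
  obtain ⟨hM6, h6⟩ := h.lt_and_adjw_eq_one_of_three_le_w (by omega) hM (hle hM (by omega))
    (by have := s₂.pos_left; omega)
  have hw6 := h.w_eq (by omega) hM6
  have s₃ := s₂.blowDown_tail (b := 8) (by omega) hM6 rfl
  have h1' : 1 ≤ C.adjw (z 1) := by have := s₃.pos_right; omega
  have s₄ := s₃.blowDown_right (by omega)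
  obtain ⟨hM7, h7⟩ := h.lt_and_adjw_eq_one_of_three_le_w (i := 7) (by omega) hM6
    (hle hM6 (by omega)) (by have := s₄.pos_left; omega)
  have h8 : C.adjw (z 8) = 0 := h.adjw_add_two_eq_zero (i := 6) (by omega) hM7 (by omega)
  have hw7 := h.w_eq (by omega) hM7
  obtain ⟨hM8, s₅⟩ := h.blowDown_of_adjw_eq_zero (j := 9) s₄ (by omega) (by omega) hM7 h8 rfl
  have := (s₅.blowDown_tail (b := 10) le_rfl hM8 rfl).pos_right
  omega

theorem not_linearSemidef_w_two_sub_two_of_adjw_eq_three (h : C.IsFrontArm M z)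
    (h2 : C.adjw (z 2) = 3) : ¬ LinearSemidef
    ((C.w (z 5) - 1) :: tailWeights (fun i => C.w (z i)) M 6)
    [C.w (z 2) - 2, C.w (z 1), C.w (z 0)] := by
  intro hs
  have hM := h.six_le
  have hw1 := h.w_eq (i := 1) (by omega) (by omega)
  have hw2 := h.w_eq (i := 2) (by omega) (by omega)
  have hw5 := h.w_eq (i := 5) (by omega) (by omega)
  have h5 : C.adjw (z 5) = 0 := by have := h.adjw_five_eq_zero_or_eq_one; omega
  have h6 := h.adjw_six_eq_zero h5 h2
  have hle {j : ℕ} (hj : j ≤ M) (hj2 : 2 ≠ j) := h.adjw_index_le_one (by omega) hj hj2 (by omega)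
  have h1 := hle (j := 1) (by omega) (by omega)
  obtain ⟨hM6, s₁⟩ := h.blowDown_of_adjw_eq_zero (j := 7) hs (by omega) (by omega) hM h6 rfl
  have s₂ := s₁.blowDown_tail (b := 8) le_rfl hM6 rfl
  have s₃ := s₂.blowDown_right (by omega)
  obtain ⟨hM7, h7⟩ := h.lt_and_adjw_eq_one_of_three_le_w (i := 7) (by omega) hM6
    (hle hM6 (by omega)) (by have := s₃.pos_left; omega)
  have h8 : C.adjw (z 8) = 0 := by
    have := h.adjw_ne_one_of_adj (y' := z 8) h2 (h.isChain.2 7 hM7) h7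
    have := hle (j := 8) hM7 (by omega)
    have := h.adjw_nonneg (z 8)
    omega
  have hw7 := h.w_eq (by omega) hM7
  obtain ⟨hM8, s₄⟩ := h.blowDown_of_adjw_eq_zero (j := 9) s₃ (by omega) (by omega) hM7 h8 rfl
  have := (s₄.blowDown_tail (b := 10) le_rfl hM8 rfl).pos_right
  omega

theorem not_linearSemidef_w_two_sub_two (h : C.IsFrontArm M z) : ¬ LinearSemidef
    ((C.w (z 5) - 1) :: tailWeights (fun i => C.w (z i)) M 6)
    [C.w (z 2) - 2, C.w (z 1), C.w (z 0)] := by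
  have hpos := h.adjw_two_pos
  have hle := h.adjw_le_three (z 2)
  obtain h2 | h2 | h2 : C.adjw (z 2) = 1 ∨ C.adjw (z 2) = 2 ∨ C.adjw (z 2) = 3 := by omega
  · exact h.not_linearSemidef_w_two_sub_two_of_adjw_eq_one h2
  · exact h.not_linearSemidef_w_two_sub_two_of_adjw_eq_two h2
  · exact h.not_linearSemidef_w_two_sub_two_of_adjw_eq_three h2

end Config.IsFrontArm

namespace IsScrewSystem

variable {C : Config} {N M : ℕ} {z : ℕ → C.V} {α β c : ℤ} {x : ℕ → Fin N → ℤ}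

theorem alpha_eq_zero_or_eq_neg_one (arm : C.IsFrontArm M z)
    (h : IsScrewSystem (fun i => C.w (z i)) M α β c x) : α = 0 ∨ α = -1 := by
  have hw := arm.w_le (z 2)
  have hadj := arm.adjw_le_three (z 2)
  have hnorm := h.dot_self_two
  have hpos := dot_self_nonneg (x 2)
  have hlt : α < 1 := by nlinarith
  have hgt : -2 < α := by nlinarith
  omega

theorem beta_eq_zero_or_eq_one (arm : C.IsFrontArm M z)
    (h : IsScrewSystem (fun i => C.w (z i)) M α β c x) : β = 0 ∨ β = 1 := by
  have hw := arm.w_le (z 5)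
  have hadj := arm.adjw_five_eq_zero_or_eq_one
  have hnorm := h.dot_self_five
  have hpos := dot_self_nonneg (x 5)
  have hgt : -1 < β := by nlinarith [show C.adjw (z 5) ≤ 1 by omega]
  have hlt : β < 2 := by nlinarith [show C.adjw (z 5) ≤ 1 by omega]
  omega

theorem c_eq_zero_or_eq_one_or_eq_neg_one (arm : C.IsFrontArm M z)
    (h : IsScrewSystem (fun i => C.w (z i)) M α β c x) : c = 0 ∨ c = 1 ∨ c = -1 := by
  have hw := arm.w_le (z 1)
  have hadj := arm.adjw_le_three (z 1)
  have hnorm := h.dot_self_one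
  have hpos := dot_self_nonneg (x 1)
  have hlt : c < 2 := by nlinarith
  have hgt : -2 < c := by nlinarith
  omega

theorem two_le_adjw_one (arm : C.IsFrontArm M z)
    (h : IsScrewSystem (fun i => C.w (z i)) M α β c x) (hc : c ≠ 0) : 2 ≤ C.adjw (z 1) := by
  by_contra! hlt
  have hw := arm.w_le (z 1)
  have hsq : 1 ≤ c ^ 2 := by have := sq_pos_of_ne_zero hc; omega
  have h01 := dot_eq_zero_of_dot_self_nonpos (x := x 1) (by have := h.dot_self_one; omega) (x 0)
  rw [dot_comm, h.dot_zero_one] at h01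
  omega

theorem beta_eq_zero_of_c_ne_zero (arm : C.IsFrontArm M z)
    (h : IsScrewSystem (fun i => C.w (z i)) M α β c x) (hc : c ≠ 0) : β = 0 := by
  refine (h.beta_eq_zero_or_eq_one arm).resolve_right ?_
  rintro rfl
  have hsq : c ^ 2 = 1 :=
    sq_eq_one_iff.2 ((h.c_eq_zero_or_eq_one_or_eq_neg_one arm).resolve_left hc)
  have hsum : C.adjw (z 1) + C.adjw (z 5) ≤ 3 := by
    have := arm.adjw_le_three (z 1)
    have := arm.adjw_nonneg (z 6)
    have := arm.adjw_six_add_adjw_one_le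
    have := arm.adjw_five_eq_zero_or_eq_one
    omega
  have hnorm : dot (x 1) (x 1) + 2 * c * dot (x 1) (x 5) + c ^ 2 * dot (x 5) (x 5) ≤ 0 := by
    rw [h.dot_self_one, h.dot_one_five, h.dot_self_five]
    have := arm.w_le (z 1)
    have := arm.w_le (z 5)
    calc
      _ = C.w (z 1) + C.w (z 5) * c ^ 2 - 9 * c ^ 2 := by ring
      _ ≤ 0 := by rw [hsq]; omega
  have h0 := dot_add_smul_eq_zero_of_nonpos hnorm (x 0)
  rw [h.dot_zero_one, h.dot_zero_five] at h0
  omega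

theorem alpha_ne_neg_one_of_adjw_one_eq_three (arm : C.IsFrontArm M z)
    (h : IsScrewSystem (fun i => C.w (z i)) M α 0 c x) (h1 : C.adjw (z 1) = 3) : α ≠ -1 := by
  rintro rfl
  have hM := arm.six_le
  have hw2 := arm.w_le (z 2)
  have hw5 := arm.w_le (z 5)
  have h2 := arm.adjw_index_le_one (i := 1) (j := 2) (by omega) (by omega) (by omega) (by omega)
  have h5 : C.adjw (z 5) = 0 := by
    have := arm.adjw_nonneg (z 6)
    have := arm.adjw_six_add_adjw_one_le
    have := arm.adjw_five_eq_zero_or_eq_one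
    omega
  have h25 := h.dot_two_five
  have hn2 := h.dot_self_two
  have hn5 := h.dot_self_five
  have h6 := dot_add_smul_eq_zero_of_nonpos (x := x 2) (y := x 5) (k := 1) (by omega) (x 6)
  rw [h.dot_six_two, h.dot_six_five] at h6
  omega

theorem c_eq_zero (arm : C.IsFrontArm M z)
    (h : IsScrewSystem (fun i => C.w (z i)) M α β c x) : c = 0 := by
  by_contra hc
  have hM := arm.six_le
  obtain rfl := h.beta_eq_zero_of_c_ne_zero arm hc
  have h1 := h.two_le_adjw_one arm hc
  have h1' := arm.adjw_le_three (z 1)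
  have hw1 := arm.w_le (z 1)
  have hw2 := arm.w_le (z 2)
  have h2 := arm.adjw_index_le_one (i := 1) (j := 2) (by omega) (by omega) (by omega) (by omega)
  have hn1 := h.dot_self_one
  have hn2 := h.dot_self_two
  have h12 := h.dot_one_two
  have hpos (k : ℤ) : 0 < dot (x 1) (x 1) + 2 * k * dot (x 1) (x 2) + k ^ 2 * dot (x 2) (x 2) := by
    by_contra! hk
    have h0 := dot_add_smul_eq_zero_of_nonpos hk (x 0)
    rw [h.dot_zero_one, h.dot_zero_two] at h0
    omega
  have hplus := hpos 1
  have hminus := hpos (-1)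
  obtain rfl | rfl := (h.c_eq_zero_or_eq_one_or_eq_neg_one arm).resolve_left hc <;>
    obtain rfl | rfl := h.alpha_eq_zero_or_eq_neg_one arm
  · omega
  · exact h.alpha_ne_neg_one_of_adjw_one_eq_three arm (by omega) rfl
  · exact arm.not_linearSemidef_w_one_sub_three (h.linearSemidef_five_one rfl rfl rfl)
  · omega

theorem alpha_eq_zero_and_beta_eq_zero (arm : C.IsFrontArm M z)
    (h : IsScrewSystem (fun i => C.w (z i)) M α β c x) : α = 0 ∧ β = 0 := by
  obtain rfl := h.c_eq_zero arm
  have hw2 := arm.w_le (z 2)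
  have hw5 := arm.w_le (z 5)
  have h25 := h.dot_two_five
  have hn2 := h.dot_self_two
  have hn5 := h.dot_self_five
  obtain rfl | rfl := h.alpha_eq_zero_or_eq_neg_one arm <;>
    obtain rfl | rfl := h.beta_eq_zero_or_eq_one arm
  · exact ⟨rfl, rfl⟩
  · exact (arm.not_linearSemidef_w_five_sub_two (h.linearSemidef_five_two rfl rfl)).elim
  · exact (arm.not_linearSemidef_w_two_sub_two (h.linearSemidef_five_two rfl rfl)).elim
  · have hpos (k : ℤ) :
        0 < dot (x 5) (x 5) + 2 * k * dot (x 5) (x 2) + k ^ 2 * dot (x 2) (x 2) := by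
      by_contra! hk
      have h6 := dot_add_smul_eq_zero_of_nonpos hk (x 6)
      rw [h.dot_six_five, h.dot_six_two] at h6
      omega
    have hzero := hpos 0
    have hminus := hpos (-1)
    rw [dot_comm] at h25
    have := arm.adjw_five_eq_zero_or_eq_one
    omega

end IsScrewSystem

namespace Config

section Embedding

variable {C : Config} {N : ℕ} {φ : C.V → Fin N → ℤ}

theorem IsEmbedding.dot_self (hφ : C.IsEmbedding N φ) (u : C.V) : dot (φ u) (φ u) = C.w u := by rw
    [hφ, if_pos rfl]

theorem IsEmbedding.dot_of_adj (hφ : C.IsEmbedding N φ) {u v : C.V} (h : C.graph.Adj u v) : dot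
    (φ u) (φ v) = -1 := by
  rw [hφ, if_neg h.ne, if_pos h]

theorem IsEmbedding.dot_of_not_adj (hφ : C.IsEmbedding N φ) {u v : C.V} (hne : u ≠ v)
    (h : ¬ C.graph.Adj u v) :
    dot (φ u) (φ v) = 0 := by
  rw [hφ, if_neg hne, if_neg h]

end Embedding

namespace IsFrontArm

variable {C : Config} {M N : ℕ} {z : ℕ → C.V} {φ : C.V → Fin N → ℤ}
  {F : SignedFrame (Fin 3) N}

theorem dot_three_self (arm : C.IsFrontArm M z) (hφ : C.IsEmbedding N φ) :
    dot (φ (z 3)) (φ (z 3)) = 2 := by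
  have hM := arm.six_le
  rw [hφ.dot_self, arm.w_eq (by omega) (by omega), arm.adjw_three, zero_add]

theorem dot_four_self (arm : C.IsFrontArm M z) (hφ : C.IsEmbedding N φ) :
    dot (φ (z 4)) (φ (z 4)) = 2 := by
  have hM := arm.six_le
  rw [hφ.dot_self, arm.w_eq (by omega) (by omega), arm.adjw_four, zero_add]

theorem dot_index (arm : C.IsFrontArm M z) (hφ : C.IsEmbedding N φ) {i j : ℕ} (hij : i < j)
    (hj : j ≤ M) : dot (φ (z i)) (φ (z j)) = if j = i + 1 then -1 else 0 := by
  split_ifs with h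
  · subst h
    exact hφ.dot_of_adj (arm.isChain.2 i (by omega))
  · exact hφ.dot_of_not_adj (arm.isChain.ne (by omega) hj (by omega))
      (arm.isChain.not_adj arm.isLinear.2 (by omega) hj)

theorem dot_four_three (arm : C.IsFrontArm M z) (hφ : C.IsEmbedding N φ) :
    dot (φ (z 4)) (φ (z 3)) = -1 := by
  have hM := arm.six_le
  rw [dot_comm, arm.dot_index hφ (by omega) (by omega), if_pos rfl]

theorem dot_eq_zero_of_ne (arm : C.IsFrontArm M z) (hφ : C.IsEmbedding N φ) {x : C.V} {i : ℕ}
    (hi : 0 < i) (hiM : i < M) (hx : ∀ j, i - 1 ≤ j → j ≤ i + 1 → z j ≠ x) :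
    dot (φ x) (φ (z i)) = 0 := by
  obtain ⟨i, rfl⟩ := Nat.exists_eq_add_one.2 hi
  refine hφ.dot_of_not_adj (hx _ (by omega) (by omega)).symm fun hadj => ?_
  rcases arm.isChain.eq_or_eq_of_adj arm.isLinear.1 hiM hadj.symm with h | h
  · exact hx _ (by omega) (by omega) h.symm
  · exact hx _ (by omega) (by omega) h.symm

theorem coord_eq_coord_one (arm : C.IsFrontArm M z) (hφ : C.IsEmbedding N φ)
    (hF : F.IsAdapted (φ (z 4)) (φ (z 3))) {x : C.V} (hx : ∀ i, 2 ≤ i → i ≤ 5 → z i ≠ x)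
    (k : Fin 3) : F.coord k (φ x) = F.coord 1 (φ x) := by
  have hM := arm.six_le
  have h4 := hF.1 (φ x)
  have h3 := hF.2 (φ x)
  rw [arm.dot_eq_zero_of_ne hφ (by omega) (by omega)
    fun i hi hi' => hx i (by omega) (by omega)] at h4 h3
  fin_cases k <;> simp only [Fin.zero_eta, Fin.mk_one, Fin.reduceFinMk] <;> omega

theorem coord_two (arm : C.IsFrontArm M z) (hφ : C.IsEmbedding N φ)
    (hF : F.IsAdapted (φ (z 4)) (φ (z 3))) :
    F.coord 0 (φ (z 2)) = F.coord 1 (φ (z 2)) ∧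
      F.coord 2 (φ (z 2)) = F.coord 1 (φ (z 2)) + 1 := by
  have hM := arm.six_le
  have h4 := hF.1 (φ (z 2))
  have h3 := hF.2 (φ (z 2))
  rw [arm.dot_index hφ (by omega) (by omega), if_neg (by omega)] at h4
  rw [arm.dot_index hφ (by omega) (by omega), if_pos rfl] at h3
  omega

theorem coord_five (arm : C.IsFrontArm M z) (hφ : C.IsEmbedding N φ)
    (hF : F.IsAdapted (φ (z 4)) (φ (z 3))) :
    F.coord 0 (φ (z 5)) = F.coord 1 (φ (z 5)) - 1 ∧
      F.coord 2 (φ (z 5)) = F.coord 1 (φ (z 5)) := by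
  have hM := arm.six_le
  have h4 := hF.1 (φ (z 5))
  have h3 := hF.2 (φ (z 5))
  rw [dot_comm, arm.dot_index hφ (by omega) (by omega), if_pos rfl] at h4
  rw [dot_comm, arm.dot_index hφ (by omega) (by omega), if_neg (by omega)] at h3
  omega

theorem four_le_w_of_coord_ne_zero (arm : C.IsFrontArm M z) (hφ : C.IsEmbedding N φ)
    (hF : F.IsAdapted (φ (z 4)) (φ (z 3))) {x : C.V} (hx : ∀ i, 1 ≤ i → i ≤ 5 → z i ≠ x)
    (hc : F.coord 1 (φ x) ≠ 0) : 4 ≤ C.w x := by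
  by_contra! hw
  have hM := arm.six_le
  have hcoord := arm.coord_eq_coord_one hφ hF fun i hi => hx i (by omega)
  have hsq := sq_pos_of_ne_zero hc
  have hnorm : dot (F.residue (φ x)) (F.residue (φ x)) ≤ 0 := by
    rw [F.dot_residue, hφ.dot_self]
    simp only [hcoord, Fin.sum_univ_three, ← sq]
    omega
  have h2 := dot_eq_zero_of_dot_self_nonpos hnorm (F.residue (φ (z 2)))
  obtain ⟨h20, h22⟩ := arm.coord_two hφ hF
  have hx2 := arm.dot_eq_zero_of_ne hφ (i := 2) (by omega) (by omega)
    fun i hi hi' => hx i (by omega) (by omega)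
  rw [F.dot_residue, hx2, Fin.sum_univ_three, hcoord 0, hcoord 2, h20, h22] at h2
  have hmul : F.coord 1 (φ x) * (3 * F.coord 1 (φ (z 2)) + 1) = 0 := by linarith
  rcases mul_eq_zero.1 hmul with h | h
  · exact hc h
  · omega

theorem card_supp_inter_of_coord_ne_zero (arm : C.IsFrontArm M z) (hφ : C.IsEmbedding N φ)
    (hF : F.IsAdapted (φ (z 4)) (φ (z 3))) {x : C.V} (hx : ∀ i, 1 ≤ i → i ≤ 5 → z i ≠ x)
    (hc : F.coord 1 (φ x) ≠ 0) :
    (supp (φ x) ∩ supp (φ (z 4))).card = 2 ∧ (supp (φ x) ∩ supp (φ (z 3))).card = 2 ∧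
      (supp (φ x) ∩ supp (φ (z 2))).card = 2 := by
  have hM := arm.six_le
  have hw4 := arm.four_le_w_of_coord_ne_zero hφ hF hx hc
  have hwx := arm.w_le x
  have hcoord := arm.coord_eq_coord_one hφ hF fun i hi => hx i (by omega)
  have habs := SignedFrame.abs_apply_le_one_of_coord_eq hcoord hc
    (by have := hφ.dot_self x; have := arm.adjw_le_three x; omega)
  have hmeets (i : ℕ) (hi : 2 ≤ i) (hi4 : i ≤ 4) (hw : dot (φ (z i)) (φ (z i)) < 4)
      (k : Fin 3) (hk : F.coord k (φ (z i)) ≠ 0) : (supp (φ x) ∩ supp (φ (z i))).card = 2 :=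
    have hortho : dot (φ x) (φ (z i)) = 0 := arm.dot_eq_zero_of_ne hφ (by omega) (by omega)
      fun j hj hj' => hx j (by omega) (by omega)
    card_supp_inter_eq_two habs hw hortho
      (F.coord_eq_zero_iff.not.1 ((hcoord k).trans_ne hc)) (F.coord_eq_zero_iff.not.1 hk)
  have h3 := arm.dot_three_self hφ
  have h4 := arm.dot_four_self hφ
  have h43 := arm.dot_four_three hφ
  have h2 : dot (φ (z 2)) (φ (z 2)) < 4 := by
    rw [hφ.dot_self]
    have := arm.w_le (z 2)
    have := arm.adjw_le_one (y := z 2) (by omega) (hx 2 (by omega) (by omega)).symm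
    omega
  refine ⟨hmeets 4 (by omega) le_rfl (by omega) 0 (by have := hF.coord_left h4 h43; omega),
    hmeets 3 (by omega) (by omega) (by omega) 1 (by have := hF.coord_right h3 h43; omega), ?_⟩
  by_cases hα : F.coord 1 (φ (z 2)) = 0
  · exact hmeets 2 le_rfl (by omega) h2 2 (by have := arm.coord_two hφ hF; omega)
  · exact hmeets 2 le_rfl (by omega) h2 1 hα

theorem coord_eq_screwCoord (arm : C.IsFrontArm M z) (hφ : C.IsEmbedding N φ)
    (hF : F.IsAdapted (φ (z 4)) (φ (z 3)))
    (hlight : ∀ x, (∀ i, 1 ≤ i → i ≤ 5 → z i ≠ x) → F.coord 1 (φ x) = 0) {i : ℕ} (hi : i ≤ M)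
    (h3 : i ≠ 3) (h4 : i ≠ 4) (k : Fin 3) :
    F.coord k (φ (z i)) = screwCoord (F.coord 1 (φ (z 2))) (F.coord 1 (φ (z 5)))
      (F.coord 1 (φ (z 1))) i k := by
  have hM := arm.six_le
  obtain rfl | rfl | rfl | hfar : i = 1 ∨ i = 2 ∨ i = 5 ∨ (i < 1 ∨ 5 < i) := by omega
  · rw [arm.coord_eq_coord_one hφ hF fun j hj hj5 => arm.isChain.ne (by omega) hi (by omega)]
    fin_cases k <;> rfl
  · obtain ⟨h20, h22⟩ := arm.coord_two hφ hF
    fin_cases k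
    exacts [h20, rfl, h22]
  · obtain ⟨h50, h52⟩ := arm.coord_five hφ hF
    fin_cases k
    exacts [h50, rfl, h52]
  · have hne (j : ℕ) (hj : 1 ≤ j) (hj5 : j ≤ 5) : z j ≠ z i :=
      arm.isChain.ne (by omega) hi (by omega)
    rw [arm.coord_eq_coord_one hφ hF fun j hj => hne j (by omega), hlight _ hne, screwCoord]
    · rfl
    all_goals omega

theorem isScrewSystem (arm : C.IsFrontArm M z) (hφ : C.IsEmbedding N φ)
    (hF : F.IsAdapted (φ (z 4)) (φ (z 3)))
    (hlight : ∀ x, (∀ i, 1 ≤ i → i ≤ 5 → z i ≠ x) → F.coord 1 (φ x) = 0) :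
    IsScrewSystem (fun i => C.w (z i)) M (F.coord 1 (φ (z 2))) (F.coord 1 (φ (z 5)))
      (F.coord 1 (φ (z 1))) fun i => F.residue (φ (z i)) where
  six_le := arm.six_le
  dot_self i hi h3 h4 := by
    simp only [F.dot_residue, hφ.dot_self, arm.coord_eq_screwCoord hφ hF hlight hi h3 h4]
  dot_lt i j hij hj hi3 hi4 hj3 hj4 := by
    simp only [F.dot_residue, arm.dot_index hφ hij hj,
      arm.coord_eq_screwCoord hφ hF hlight hj hj3 hj4,
      arm.coord_eq_screwCoord hφ hF hlight (hij.le.trans hj) hi3 hi4]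

theorem apply_screw_eq_zero (arm : C.IsFrontArm M z) (hφ : C.IsEmbedding N φ)
    (hF : F.IsAdapted (φ (z 4)) (φ (z 3)))
    (hlight : ∀ x, (∀ i, 1 ≤ i → i ≤ 5 → z i ≠ x) → F.coord 1 (φ x) = 0)
    {e : Fin N} (he2 : φ (z 2) e ≠ 0) (he3 : φ (z 3) e ≠ 0) {u : C.V} (hu2 : u ≠ z 2)
    (hu3 : u ≠ z 3) : φ u e = 0 := by
  have sys := arm.isScrewSystem hφ hF hlight
  obtain ⟨hα, hβ⟩ := sys.alpha_eq_zero_and_beta_eq_zero arm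
  have hc := sys.c_eq_zero arm
  have h43 := arm.dot_four_three hφ
  obtain rfl : e = F.index 2 := by
    refine (hF.eq_index_of_apply_ne_zero (arm.dot_three_self hφ) h43 he3).resolve_left ?_
    rintro rfl
    exact he2 (F.coord_eq_zero_iff.1 hα)
  rw [← F.coord_eq_zero_iff]
  by_cases h4 : z 4 = u
  · rw [← h4]
    exact (hF.coord_left (arm.dot_four_self hφ) h43).2.2
  by_cases h5 : z 5 = u
  · rw [← h5, (arm.coord_five hφ hF).2, hβ]
  rw [arm.coord_eq_coord_one hφ hF fun i hi hi5 => by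
    obtain rfl | rfl | rfl | rfl : i = 2 ∨ i = 3 ∨ i = 4 ∨ i = 5 := by omega
    exacts [hu2.symm, hu3.symm, h4, h5]]
  by_cases h1 : z 1 = u
  · rw [← h1, hc]
  · refine hlight u fun i hi hi5 => ?_
    obtain rfl | rfl | rfl | rfl | rfl : i = 1 ∨ i = 2 ∨ i = 3 ∨ i = 4 ∨ i = 5 := by omega
    exacts [h1, hu2.symm, hu3.symm, h4, h5]

end IsFrontArm

end Config

/-- Lemma 5.2: an unclean screw forces a vertex of weight at least `4` whose support
meets those of `v₁`, `v₂` and `v₃` in exactly two basis vectors each. -/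
theorem statement3 (C : Config) (hlin : C.IsLinear) (hwc : C.WorkingConditions)
    (hbad : ∃ x : C.V, C.IsBad x) (N : ℕ) (φ : C.V → Fin N → ℤ)
    (hφ : C.IsEmbedding N φ) (m : ℕ) (vc : ℕ → C.V) (hebp : C.IsExtBadPart m vc)
    (hleaf : ¬ C.IsLeaf (vc 0)) (e : Fin N)
    (he2 : φ (vc 2) e ≠ 0) (he3 : φ (vc 3) e ≠ 0)
    (hnotclean : ¬ ∀ u : C.V, u ≠ vc 2 → u ≠ vc 3 → φ u e = 0) :
    ∃ x : C.V, 4 ≤ C.w x ∧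
      (supp (φ x) ∩ supp (φ (vc 1))).card = 2 ∧
      (supp (φ x) ∩ supp (φ (vc 2))).card = 2 ∧
      (supp (φ x) ∩ supp (φ (vc 3))).card = 2 := by
  obtain ⟨M, z, arm, h2, h3, h4⟩ := hebp.exists_isFrontArm hlin hwc hbad hleaf
  rw [← h3] at he2 hnotclean ⊢
  rw [← h2] at he3 hnotclean ⊢
  rw [← h4]
  obtain ⟨F, hF⟩ := exists_isAdapted (arm.dot_four_self hφ) (arm.dot_three_self hφ)
    (arm.dot_four_three hφ)
  by_cases hlight : ∀ x, (∀ i, 1 ≤ i → i ≤ 5 → z i ≠ x) → F.coord 1 (φ x) = 0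
  · exact (hnotclean fun u hu3 hu2 =>
      arm.apply_screw_eq_zero hφ hF hlight he3 he2 hu2 hu3).elim
  · push Not at hlight
    obtain ⟨x, hx, hc⟩ := hlight
    exact ⟨x, arm.four_le_w_of_coord_ne_zero hφ hF hx hc,
      arm.card_supp_inter_of_coord_ne_zero hφ hF hx hc⟩

end LensPaper
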